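/- Let 𝓖 = {(X_i, u_i, 𝓕_i, q_i) : i ∈ I} be a Bayesian game over a complete finite probability space (Ω,𝓕,μ) with common information (𝓕_i = 𝓕 for all i, 𝓕 generated by a measurable partition of Ω, and each cell E(ω) satisfying ∫_{E(ω)} q_i dμ > 0), and assume each u_i is jointly measurable and integrably bounded so that the conditional expected utilities h_i are well-defined. Suppose for each i ∈ I: (1) X_i is a nonempty, compact, convex subset of a separable Banach space Y; (2) for each ω ∈ Ω and x_{-i} ∈ X_{-i}, the function x_i ↦ u_i(ω, x_i, x_{-i}) is concave on X_i; (3) the correspondence Q_i^{u_i} satisfies the continuous inclusion property if μ is atomic and the strong continuous inclusion property otherwise; and (4) either Y is finite-dimensional or 𝕂(Q_i^{u_i})(ω,x) ≠ ∅ for all (ω,x) ∈ U_{Q_i^{u_i}}. Then 𝓖 has a Bayesian equilibrium. -/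

import Mathlib

open MeasureTheory Set TopologicalSpace

noncomputable section

/-- A correspondence `Φ : Z → 2^Y` is lower-semicontinuous if `{x | Φ x ∩ V ≠ ∅}` is open
for every open `V ⊆ Y`. -/
def LSCCorr {Z Y : Type*} [TopologicalSpace Z] [TopologicalSpace Y] (Φ : Z → Set Y) : Prop :=
  ∀ V : Set Y, IsOpen V → IsOpen {x : Z | (Φ x ∩ V).Nonempty}

/-- Lower semicontinuity of the restriction of a correspondence to a subset `O`
(with the subspace topology). -/
def LSCCorrOn {Z Y : Type*} [TopologicalSpace Z] [TopologicalSpace Y] (Φ : Z → Set Y)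
    (O : Set Z) : Prop :=
  ∀ V : Set Y, IsOpen V → IsOpen {x : O | (Φ (x : Z) ∩ V).Nonempty}

/-- A correspondence `Φ : Z → 2^Y` is upper-semicontinuous if `{x | Φ x ⊆ V}` is open
for every open `V ⊆ Y`. -/
def USCCorr {Z Y : Type*} [TopologicalSpace Z] [TopologicalSpace Y] (Φ : Z → Set Y) : Prop :=
  ∀ V : Set Y, IsOpen V → IsOpen {x : Z | Φ x ⊆ V}

/-- A correspondence `Φ : T → 2^Y` is lower measurable if `{t | Φ t ∩ V ≠ ∅}` is measurable
for every open `V ⊆ Y`. -/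
def LowerMeasCorr {T Y : Type*} [MeasurableSpace T] [TopologicalSpace Y] (Φ : T → Set Y) : Prop :=
  ∀ V : Set Y, IsOpen V → MeasurableSet {t : T | (Φ t ∩ V).Nonempty}

/-- A correspondence `Φ : T × Z → 2^Y` is jointly lower measurable if
`{(t,x) | Φ t x ∩ V ≠ ∅}` is product-measurable for every open `V ⊆ Y`. -/
def JLowerMeas {T Z Y : Type*} [MeasurableSpace T] [MeasurableSpace Z] [TopologicalSpace Y]
    (Φ : T → Z → Set Y) : Prop :=
  ∀ V : Set Y, IsOpen V → MeasurableSet {p : T × Z | (Φ p.1 p.2 ∩ V).Nonempty}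

/-- `F, O` witness the continuous inclusion property for `Ψ`. -/
def CIPWitness {T Z Y : Type*} [MeasurableSpace T] [TopologicalSpace Z]
    [NormedAddCommGroup Y] [NormedSpace ℝ Y]
    (Ψ : T → Z → Set Y) (F : Z → T → Z → Set Y) (O : Z → T → Set Z) : Prop :=
  (∀ z t, (Ψ t z).Nonempty →
      IsOpen (O z t) ∧ z ∈ O z t ∧ ∀ x ∈ O z t, (F z t x).Nonempty ∧ F z t x ⊆ Ψ t x) ∧
  (∀ z t, (Ψ t z).Nonempty → LSCCorrOn (fun x => convexHull ℝ (F z t x)) (O z t)) ∧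
  (∀ z t, ¬(Ψ t z).Nonempty → LSCCorr fun x => convexHull ℝ (F z t x))

/-- The continuous inclusion property. -/
def ContinuousInclusion {T Z Y : Type*} [MeasurableSpace T] [TopologicalSpace Z]
    [NormedAddCommGroup Y] [NormedSpace ℝ Y] (Ψ : T → Z → Set Y) : Prop :=
  ∃ F O, CIPWitness Ψ F O

/-- `F, O` witness the strong continuous inclusion property for `Ψ`. -/
def SCIPWitness {T Z Y : Type*} [MeasurableSpace T] [TopologicalSpace Z] [MeasurableSpace Z]
    [NormedAddCommGroup Y] [NormedSpace ℝ Y]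
    (Ψ : T → Z → Set Y) (F : Z → T → Z → Set Y) (O : Z → T → Set Z) : Prop :=
  CIPWitness Ψ F O ∧
  (∀ z, JLowerMeas fun t x => convexHull ℝ (F z t x)) ∧
  ((∀ y z, F y = F z) ∨
    ((Set.range F).Countable ∧
      {s : Set Z | ∃ t z, (Ψ t z).Nonempty ∧ s = O z t}.Countable ∧
      ∀ z, MeasurableSet {p : T × Z | p.2 ∈ O z p.1}) ∨
    (MeasurableSet {p : T × Z | (Ψ p.1 p.2).Nonempty} ∧
      JLowerMeas (fun t x => {z : Z | (Ψ t z).Nonempty ∧ x ∈ O z t}) ∧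
      (∀ t x, {z : Z | (Ψ t z).Nonempty ∧ x ∈ O z t}.Finite) ∧
      ∀ t x, ∃ B : Set Y, IsCompact B ∧
        LSCCorr (fun z => convexHull ℝ (F z t x)) ∧
        USCCorr (fun z => convexHull ℝ (F z t x)) ∧
        ∀ z, convexHull ℝ (F z t x) ⊆ B))

/-- The strong continuous inclusion property. -/
def StrongContinuousInclusion {T Z Y : Type*} [MeasurableSpace T] [TopologicalSpace Z]
    [MeasurableSpace Z] [NormedAddCommGroup Y] [NormedSpace ℝ Y] (Ψ : T → Z → Set Y) : Prop :=
  ∃ F O, SCIPWitness Ψ F O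

/-- The operator `𝕂(Ψ)(t,x) = ⋃ {int F_z(t,x) : Ψ(t,z) ≠ ∅ and x ∈ O_z^t}`. -/
def Kmap {T Z Y : Type*} [TopologicalSpace Y]
    (Ψ : T → Z → Set Y) (F : Z → T → Z → Set Y) (O : Z → T → Set Z)
    (t : T) (x : Z) : Set Y :=
  ⋃ z ∈ {z : Z | (Ψ t z).Nonempty ∧ x ∈ O z t}, interior (F z t x)

/-- `A` is an atom of the measure `μ`. -/
def IsMeasAtom {T : Type*} [MeasurableSpace T] (μ : Measure T) (A : Set T) : Prop :=
  MeasurableSet A ∧ μ A ≠ 0 ∧ ∀ B ⊆ A, MeasurableSet B → μ B = 0 ∨ μ (A \ B) = 0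

/-- The measure space is (purely) atomic: it is the union of countably many atoms. -/
def IsAtomicMeasure {T : Type*} [MeasurableSpace T] (μ : Measure T) : Prop :=
  ∃ S : Set (Set T), S.Countable ∧ (∀ A ∈ S, IsMeasAtom μ A) ∧ ⋃₀ S = Set.univ

/-- `ψ` is a Carathéodory-type selection of `Ψ` on `U_Ψ`: it selects from `Ψ` on `U_Ψ`,
is measurable in `t` on each section `U_Ψ^x` and continuous in `x` on each section `U_Ψ^t`. -/
def CaraSelection {T Z Y : Type*} [MeasurableSpace T] [TopologicalSpace Z]
    [TopologicalSpace Y] [MeasurableSpace Y]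
    (Ψ : T → Z → Set Y) (ψ : T → Z → Y) : Prop :=
  (∀ t x, (Ψ t x).Nonempty → ψ t x ∈ Ψ t x) ∧
  (∀ x : Z, Measurable fun t : {t : T // (Ψ t x).Nonempty} => ψ t.1 x) ∧
  (∀ t : T, Continuous fun x : {x : Z // (Ψ t x).Nonempty} => ψ t x.1)

/-- The preference correspondence induced by a family of payoff functions:
`y ∈ PrefCorr X v i ω x` iff `y ∈ Xᵢ` and `v i (ω, (y, x₋ᵢ)) − v i (ω, x) > 0`.
With `v = h` (the conditional expected utilities) this is the correspondence `Qᵢ^{uᵢ}`. -/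
def PrefCorr {Ω Y I : Type*} [DecidableEq I] (X : I → Set Y)
    (v : (i : I) → Ω → ((j : I) → X j) → ℝ) (i : I) (ω : Ω) (x : (j : I) → X j) : Set Y :=
  {y : Y | ∃ hy : y ∈ X i, 0 < v i ω (Function.update x i ⟨y, hy⟩) - v i ω x}

theorem aux_pair {α β : Type*} [DecidableEq α] [DecidableEq β] (A : Finset α) (B : Finset β)
    (f : α → β) (hf : ∀ a ∈ A, f a ∈ B) (hs : ∀ b ∈ B, ∃ a ∈ A, f a = b)
    (hc : A.card = B.card + 1) :
    ∃ a ∈ A, ∃ b ∈ A, a ≠ b ∧ f a = f b ∧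
      (∀ x ∈ A, ∀ y ∈ A, x ≠ a → y ≠ a → f x = f y → x = y) ∧
      (∀ x ∈ A, ∀ y ∈ A, x ≠ b → y ≠ b → f x = f y → x = y) := by
  obtain ⟨a, ha, b, hb, hab, hfab⟩ :=
    Finset.exists_ne_map_eq_of_card_lt_of_maps_to (s := A) (t := B) (f := f) (by omega)
      (fun x hx => hf x hx)
  have key : ∀ a ∈ A, ∀ b ∈ A, a ≠ b → f a = f b →
      ∀ x ∈ A, ∀ y ∈ A, x ≠ a → y ≠ a → f x = f y → x = y := by
    intro a ha b hb hab hfab x hx y hy hxa hya hxy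
    have hinj := Finset.injOn_of_surjOn_of_card_le (s := A.erase a) (t := B) f
      (fun x hx => hf x (Finset.mem_of_mem_erase hx)) (by
        intro c hc'
        obtain ⟨x, hx, rfl⟩ := hs c hc'
        by_cases h : x = a
        · subst h
          exact ⟨b, by simp [hb, hab.symm], hfab.symm⟩
        · exact ⟨x, by simp [hx, h], rfl⟩)
      (by rw [Finset.card_erase_of_mem ha]; omega)
    exact hinj (by simp [hx, hxa]) (by simp [hy, hya]) hxy
  exact ⟨a, ha, b, hb, hab, hfab, key a ha b hb hab hfab, key b hb a ha hab.symm hfab.symm⟩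

/-- Domination of a finite set with respect to a family of rankings. -/
def ScarfDom {I W α : Type*} [LinearOrder α] (r : I → W → α) (E : Finset W) : Prop :=
  ∀ w, ∃ i, ∀ e ∈ E, r i w ≤ r i e

theorem scarf_cell {I W : Type*} [Fintype I] [DecidableEq I] [DecidableEq W]
    (l : W → I) (i0 : I) (E : Finset W) (hE : E.card = Fintype.card I)
    (hnf : ∃ i, ∀ e ∈ E, l e ≠ i) :
    Even (E.powerset.filter (fun G => G.card + 1 = Fintype.card I ∧
      ∀ i, i ≠ i0 → ∃ e ∈ G, l e = i)).card := by
  by_cases hne : (E.powerset.filter (fun G => G.card + 1 = Fintype.card I ∧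
      ∀ i, i ≠ i0 → ∃ e ∈ G, l e = i)).Nonempty
  · obtain ⟨G, hG⟩ := hne
    simp only [Finset.mem_filter, Finset.mem_powerset] at hG
    obtain ⟨hGE, hGc, hGl⟩ := hG
    obtain ⟨i, hi⟩ := hnf
    have hii : i = i0 := by
      by_contra h
      obtain ⟨e, he, hl⟩ := hGl i h
      exact hi e (hGE he) hl
    subst hii
    obtain ⟨a, ha, b, hb, hab, hfab, hia, hib⟩ := aux_pair E (Finset.univ.erase i) l
      (fun e he => by simp [hi e he])
      (fun j hj => by
        obtain ⟨e, he, hl⟩ := hGl j (by simpa using hj)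
        exact ⟨e, hGE he, hl⟩)
      (by rw [Finset.card_erase_of_mem (Finset.mem_univ _), hE, Finset.card_univ]; omega)
    have : (E.powerset.filter (fun G => G.card + 1 = Fintype.card I ∧
      ∀ j, j ≠ i → ∃ e ∈ G, l e = j)) = {E.erase a, E.erase b} := by
      ext H
      simp only [Finset.mem_filter, Finset.mem_powerset, Finset.mem_insert, Finset.mem_singleton]
      constructor
      · rintro ⟨hHE, hHc, hHl⟩
        obtain ⟨c, hc⟩ : ∃ c, E \ H = {c} := by
          rw [← Finset.card_eq_one, Finset.card_sdiff_of_subset hHE]; omega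
        have hcE : c ∈ E := (Finset.mem_sdiff.1 (hc ▸ Finset.mem_singleton_self c)).1
        have hHe : H = E.erase c := by
          rw [Finset.erase_eq, ← hc, Finset.sdiff_sdiff_eq_self hHE]
        have hcl : ∃ e ∈ H, l e = l c := hHl _ (hi c hcE)
        obtain ⟨e, he, hl⟩ := hcl
        rw [hHe] at he
        have hec := Finset.ne_of_mem_erase he
        have heE := Finset.mem_of_mem_erase he
        by_cases h1 : c = a
        · left; rw [hHe, h1]
        · by_cases h2 : c = b
          · right; rw [hHe, h2]
          · exfalso
            by_cases h3 : e = a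
            · exact hec (hib e heE c hcE (by rw [h3]; exact hab) h2 hl)
            · exact hec (hia e heE c hcE h3 h1 hl)
      · have key : ∀ a ∈ E, ∀ b ∈ E, a ≠ b → l a = l b → (E.erase a ⊆ E ∧
            (E.erase a).card + 1 = Fintype.card I ∧ ∀ j, j ≠ i → ∃ e ∈ E.erase a, l e = j) := by
          intro a ha b hb hab hfab
          refine ⟨Finset.erase_subset _ _, by rw [Finset.card_erase_of_mem ha]; omega, ?_⟩
          intro j hj
          obtain ⟨e, he, hl⟩ := hGl j hj
          by_cases h : e = a
          · exact ⟨b, by simp [hb, hab.symm], by rw [← hfab, ← h, hl]⟩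
          · exact ⟨e, by simp [h, hGE he], hl⟩
        rintro (rfl | rfl)
        · exact key a ha b hb hab hfab
        · exact key b hb a ha hab.symm hfab.symm
    rw [this, Finset.card_pair]
    · exact even_two
    · intro h
      have : b ∈ E.erase a := by simp [hb, hab.symm]
      rw [h] at this
      simp at this
  · rw [Finset.not_nonempty_iff_eq_empty] at hne
    rw [hne]; simp

theorem scarf_door {I W α : Type*} [Fintype I] [DecidableEq I] [Fintype W] [DecidableEq W]
    [LinearOrder α]
    (r : I → W → α) (hr : ∀ i, Function.Injective (r i))
    (s : I → W) (hsmin : ∀ i w, r i (s i) ≤ r i w)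
    (hsmax : ∀ i j w, i ≠ j → w ∉ Set.range s → r i w < r i (s j))
    (G : Finset W) (hGc : G.card + 1 = Fintype.card I) (hG : ScarfDom r G)
    (hns : ∃ g ∈ G, g ∉ Set.range s) :
    ∃ E₁ E₂ : Finset W, E₁ ≠ E₂ ∧ ∀ E : Finset W,
      (G ⊆ E ∧ E.card = Fintype.card I ∧ ScarfDom r E) ↔ E = E₁ ∨ E = E₂ := by
  classical
  obtain ⟨g0, hg0, hg0s⟩ := hns
  have hmin : ∀ i, ∃ m ∈ G, ∀ e ∈ G, r i m ≤ r i e :=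
    fun i => Finset.exists_min_image G (r i) ⟨g0, hg0⟩
  choose m hmG hm using hmin
  obtain ⟨i, -, j, -, hij, hmij, hia, hja⟩ := aux_pair (Finset.univ : Finset I) G m
    (fun i _ => hmG i) (fun b hb => by
      obtain ⟨i, hi⟩ := hG b
      exact ⟨i, Finset.mem_univ _, hr i (le_antisymm (hm i b hb) (hi _ (hmG i)))⟩)
    (by rw [Finset.card_univ]; omega)
  -- a member of G is a minimum for some index other than a given one of the pair
  have hcov : ∀ g ∈ G, ∃ k, m k = g := fun b hb => by
      obtain ⟨i, hi⟩ := hG b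
      exact ⟨i, hr i (le_antisymm (hm i b hb) (hi _ (hmG i)))⟩
  have key : ∀ i j, i ≠ j → m i = m j → ∃ t, t ∉ G ∧ (∀ k, k ≠ i → r k (m k) < r k t) ∧
      (∀ w, (∀ k, k ≠ i → r k (m k) < r k w) → r i w ≤ r i t) := by
    intro i j hij hmij
    have hne : (Finset.univ.filter (fun w => ∀ k, k ≠ i → r k (m k) < r k w)).Nonempty := by
      refine ⟨s i, ?_⟩
      simp only [Finset.mem_filter, Finset.mem_univ, true_and]
      intro k hk
      by_cases hmk : m k ∈ Set.range s
      · obtain ⟨p, hp⟩ := hmk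
        by_cases hpk : p = k
        · subst hpk
          rw [← hp]
          refine lt_of_le_of_ne (hsmin p _) ?_
          intro h
          have h2 := hr p h
          have h3 := hsmax p i g0 hk hg0s
          rw [← h2] at h3
          exact absurd h3 (not_lt.2 (hsmin _ _))
        · have h3 := hsmax k p g0 (Ne.symm hpk) hg0s
          rw [hp] at h3
          exact absurd h3 (not_lt.2 (hm k g0 hg0))
      · exact hsmax k i _ hk hmk
    obtain ⟨t, ht, htm⟩ := Finset.exists_max_image _ (r i) hne
    simp only [Finset.mem_filter, Finset.mem_univ, true_and] at ht htm
    refine ⟨t, ?_, ht, htm⟩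
    intro htG
    obtain ⟨k, hk⟩ := hcov t htG
    by_cases hki : k = i
    · have := ht j hij.symm
      rw [← hmij, ← hki, hk] at this
      exact lt_irrefl _ this
    · have := ht k hki
      rw [hk] at this
      exact lt_irrefl _ this
  -- adding such a `t` gives a cell
  have hcell : ∀ i t, t ∉ G → (∀ k, k ≠ i → r k (m k) < r k t) →
      (∀ w, (∀ k, k ≠ i → r k (m k) < r k w) → r i w ≤ r i t) →
      (G ⊆ insert t G ∧ (insert t G).card = Fintype.card I ∧ ScarfDom r (insert t G)) := by
    intro i t htG ht htm
    refine ⟨Finset.subset_insert _ _, by rw [Finset.card_insert_of_notMem htG]; exact hGc, ?_⟩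
    intro w
    have hti : ∀ e ∈ G, r i t ≤ r i e := by
      obtain ⟨k, hk⟩ := hG t
      by_cases hki : k = i
      · exact hki ▸ hk
      · exact absurd (ht k hki) (not_lt.2 (hk _ (hmG k)))
    by_cases hw : ∀ k, k ≠ i → r k (m k) < r k w
    · refine ⟨i, ?_⟩
      intro e he
      rcases Finset.mem_insert.1 he with rfl | he
      · exact htm w hw
      · exact (htm w hw).trans (hti e he)
    · push Not at hw
      obtain ⟨k, hki, hk⟩ := hw
      refine ⟨k, ?_⟩
      intro e he
      rcases Finset.mem_insert.1 he with rfl | he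
      · exact hk.trans (ht k hki).le
      · exact hk.trans (hm k e he)
  obtain ⟨t₁, h1G, h1a, h1b⟩ := key i j hij hmij
  obtain ⟨t₂, h2G, h2a, h2b⟩ := key j i hij.symm hmij.symm
  refine ⟨insert t₁ G, insert t₂ G, ?_, ?_⟩
  · intro h
    have h12 : t₁ = t₂ := by
      have : t₁ ∈ insert t₂ G := h ▸ Finset.mem_insert_self _ _
      rcases Finset.mem_insert.1 this with h | h
      · exact h
      · exact absurd h h1G
    subst h12
    obtain ⟨k, hk⟩ := hG t₁
    by_cases hki : k = i
    · exact absurd (h2a k (hki ▸ hij)) (not_lt.2 (hk _ (hmG k)))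
    · exact absurd (h1a k hki) (not_lt.2 (hk _ (hmG k)))
  · intro E
    constructor
    · rintro ⟨hGE, hEc, hE⟩
      obtain ⟨t, ht⟩ : ∃ t, E \ G = {t} := by
        rw [← Finset.card_eq_one, Finset.card_sdiff_of_subset hGE]; omega
      have htE := Finset.mem_sdiff.1 (ht ▸ Finset.mem_singleton_self t)
      have hEt : E = insert t G := by
        rw [← Finset.sdiff_union_of_subset hGE, ht]; rfl
      have hmE : ∀ b ∈ E, ∃ k, ∀ e ∈ E, r k b ≤ r k e := fun b _ => hE b
      -- the index of `t`
      obtain ⟨p, hp⟩ := hE t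
      -- for every g in G there is an index k ≠ p with m k = g and m k minimal in E
      have hcov' : ∀ g ∈ G, ∃ k, k ≠ p ∧ m k = g ∧ r k g < r k t := by
        intro g hg
        obtain ⟨k, hk⟩ := hE g
        have hlt : r k g < r k t := lt_of_le_of_ne (hk t htE.1) (fun h => htE.2 (hr k h ▸ hg))
        refine ⟨k, ?_, ?_, hlt⟩
        · rintro rfl
          exact absurd hlt (not_lt.2 (hp g (hGE hg)))
        · exact hr k (le_antisymm (hm k g hg) (hk _ (hGE (hmG k))))
      have hpp : p = i ∨ p = j := by
        obtain ⟨k, hkp, hmk, -⟩ := hcov' (m p) (hmG p)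
        by_contra h
        push Not at h
        by_cases hki : k = i
        · exact hkp (hja k (Finset.mem_univ _) p (Finset.mem_univ _) (hki ▸ hij) h.2 hmk)
        · exact hkp (hia k (Finset.mem_univ _) p (Finset.mem_univ _) hki h.1 hmk)
      have fin : ∀ p t', (∀ e ∈ E, r p t ≤ r p e) →
          (∀ x y, x ≠ p → y ≠ p → m x = m y → x = y) →
          (∀ g ∈ G, ∃ k, k ≠ p ∧ m k = g ∧ r k g < r k t) →
          (∀ k, k ≠ p → r k (m k) < r k t') →
          (∀ w, (∀ k, k ≠ p → r k (m k) < r k w) → r p w ≤ r p t') → t = t' := by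
        intro p t' hp hinj hcv ht'a ht'b
        have hta : ∀ k, k ≠ p → r k (m k) < r k t := by
          intro k hk
          obtain ⟨k', hk', hmk, hlt⟩ := hcv (m k) (hmG k)
          have := hinj k' k hk' hk hmk
          rw [this] at hlt
          exact hlt
        refine hr p (le_antisymm (ht'b t hta) ?_)
        obtain ⟨k, hk⟩ := hE t'
        by_cases hkp : k = p
        · rw [← hkp]; exact hk t htE.1
        · exact absurd (ht'a k hkp) (not_lt.2 (hk _ (hGE (hmG k))))
      rcases hpp with rfl | rfl
      · left
        rw [hEt, fin p t₁ hp (fun x y hx hy h => hia x (Finset.mem_univ _) y (Finset.mem_univ _)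
          hx hy h) hcov' h1a h1b]
      · right
        rw [hEt, fin p t₂ hp (fun x y hx hy h => hja x (Finset.mem_univ _) y (Finset.mem_univ _)
          hx hy h) hcov' h2a h2b]
    · rintro (rfl | rfl)
      · exact hcell i t₁ h1G h1a h1b
      · exact hcell j t₂ h2G h2a h2b

theorem scarf_outer {I W α : Type*} [Fintype I] [DecidableEq I] [Fintype W] [DecidableEq W]
    [LinearOrder α]
    (r : I → W → α) (hr : ∀ i, Function.Injective (r i))
    (s : I → W) (hs : Function.Injective s) (hsmin : ∀ i w, r i (s i) ≤ r i w)
    (hsmax : ∀ i j w, i ≠ j → w ∉ Set.range s → r i w < r i (s j))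
    (hT : ∃ w, w ∉ Set.range s) (i0 : I) :
    ∃ E₁ : Finset W, ∀ E : Finset W,
      ((Finset.univ.erase i0).image s ⊆ E ∧ E.card = Fintype.card I ∧ ScarfDom r E) ↔ E = E₁ := by
  classical
  obtain ⟨w0, hw0⟩ := hT
  obtain ⟨t, ht, htm⟩ := Finset.exists_max_image
    (Finset.univ.filter (fun w => w ∉ Set.range s)) (r i0) ⟨w0, by simpa using hw0⟩
  simp only [Finset.mem_filter, Finset.mem_univ, true_and] at ht htm
  have hcard : ((Finset.univ.erase i0).image s).card + 1 = Fintype.card I := by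
    rw [Finset.card_image_of_injective _ hs, Finset.card_erase_of_mem (Finset.mem_univ _),
      Finset.card_univ]
    have : 0 < Fintype.card I := Fintype.card_pos_iff.2 ⟨i0⟩
    omega
  have htG : t ∉ (Finset.univ.erase i0).image s := by
    intro h
    obtain ⟨j, -, hj⟩ := Finset.mem_image.1 h
    exact ht ⟨j, hj⟩
  refine ⟨insert t ((Finset.univ.erase i0).image s), fun E => ⟨?_, ?_⟩⟩
  · rintro ⟨hGE, hEc, hE⟩
    obtain ⟨w, hw⟩ : ∃ t, E \ ((Finset.univ.erase i0).image s) = {t} := by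
      rw [← Finset.card_eq_one, Finset.card_sdiff_of_subset hGE]; omega
    have hwE := Finset.mem_sdiff.1 (hw ▸ Finset.mem_singleton_self w)
    have hEt : E = insert w ((Finset.univ.erase i0).image s) := by
      rw [← Finset.sdiff_union_of_subset hGE, hw]; rfl
    have hle : ∀ v, v ∉ Set.range s → r i0 v ≤ r i0 w := by
      intro v hv
      obtain ⟨k, hk⟩ := hE v
      by_cases hk0 : k = i0
      · rw [← hk0]; exact hk w hwE.1
      · exfalso
        have h1 := hk (s k) (hGE (Finset.mem_image_of_mem _ (by simp [hk0])))
        have h2 := hr k (le_antisymm h1 (hsmin k v))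
        exact hv ⟨k, h2.symm⟩
    have hwns : w ∉ Set.range s := by
      rintro ⟨k, hk⟩
      by_cases hk0 : k = i0
      · subst hk0
        have h1 := hle t ht
        rw [← hk] at h1
        exact ht ⟨k, hr k (le_antisymm (hsmin k t) h1)⟩
      · exact hwE.2 (hk ▸ Finset.mem_image_of_mem _ (by simp [hk0]))
    rw [hEt, hr i0 (le_antisymm (htm w hwns) (hle t ht))]
  · rintro rfl
    refine ⟨Finset.subset_insert _ _, by rw [Finset.card_insert_of_notMem htG]; exact hcard, ?_⟩
    intro w
    by_cases hw : w ∈ Set.range s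
    · obtain ⟨k, rfl⟩ := hw
      exact ⟨k, fun e _ => hsmin k e⟩
    · refine ⟨i0, fun e he => ?_⟩
      rcases Finset.mem_insert.1 he with rfl | he
      · exact htm w hw
      · obtain ⟨j, hj, rfl⟩ := Finset.mem_image.1 he
        exact (hsmax i0 j w (Finset.ne_of_mem_erase hj).symm hw).le

theorem scarf_lemma {I W α : Type*} [Fintype I] [Nonempty I] [DecidableEq I] [Fintype W]
    [DecidableEq W] [LinearOrder α]
    (r : I → W → α) (hr : ∀ i, Function.Injective (r i))
    (s : I → W) (hs : Function.Injective s) (hsmin : ∀ i w, r i (s i) ≤ r i w)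
    (hsmax : ∀ i j w, i ≠ j → w ∉ Set.range s → r i w < r i (s j))
    (hT : ∃ w, w ∉ Set.range s) (l : W → I) (hl : ∀ i, l (s i) = i) :
    ∃ E : Finset W, E.card = Fintype.card I ∧ ScarfDom r E ∧ ∀ i, ∃ e ∈ E, l e = i := by
  classical
  by_contra hcon
  push Not at hcon
  obtain ⟨i0⟩ := ‹Nonempty I›
  set C : Finset (Finset W) := Finset.univ.filter
    (fun E => E.card = Fintype.card I ∧ ScarfDom r E) with hC
  set D : Finset (Finset W) := Finset.univ.filter
    (fun G => ScarfDom r G ∧ G.card + 1 = Fintype.card I ∧ ∀ i, i ≠ i0 → ∃ e ∈ G, l e = i) with hD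
  have hmono : ∀ G E : Finset W, G ⊆ E → ScarfDom r E → ScarfDom r G := by
    intro G E hGE hE w
    obtain ⟨i, hi⟩ := hE w
    exact ⟨i, fun e he => hi e (hGE he)⟩
  have hdc := Finset.sum_card_bipartiteAbove_eq_sum_card_bipartiteBelow (s := D) (t := C)
    (fun G E => G ⊆ E)
  have heven : Even (∑ b ∈ C, (Finset.bipartiteBelow (fun G E => G ⊆ E) D b).card) := by
    refine Finset.even_sum _ fun E hE => ?_
    simp only [hC, Finset.mem_filter, Finset.mem_univ, true_and] at hE
    have := scarf_cell l i0 E hE.1 (by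
      obtain ⟨i, hi⟩ := hcon E hE.1 hE.2
      exact ⟨i, hi⟩)
    refine (congrArg Even (congrArg Finset.card ?_)).mpr this
    ext G
    simp only [Finset.bipartiteBelow, hD, Finset.mem_filter, Finset.mem_univ, true_and,
      Finset.mem_powerset]
    constructor
    · rintro ⟨⟨a, b⟩, c⟩; exact ⟨c, b⟩
    · rintro ⟨c, b⟩; exact ⟨⟨hmono G E c hE.2, b⟩, c⟩
  set G0 := (Finset.univ.erase i0).image s with hG0
  have hG0D : G0 ∈ D := by
    obtain ⟨E₁, hE₁⟩ := scarf_outer r hr s hs hsmin hsmax hT i0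
    have h1 := (hE₁ E₁).2 rfl
    simp only [hD, Finset.mem_filter, Finset.mem_univ, true_and]
    refine ⟨hmono _ _ h1.1 h1.2.2, ?_, ?_⟩
    · rw [hG0, Finset.card_image_of_injective _ hs, Finset.card_erase_of_mem (Finset.mem_univ _),
        Finset.card_univ]
      have : 0 < Fintype.card I := Fintype.card_pos_iff.2 ⟨i0⟩
      omega
    · intro i hi
      exact ⟨s i, Finset.mem_image_of_mem _ (by simp [hi]), hl i⟩
  have hodd : Odd (∑ a ∈ D, (Finset.bipartiteAbove (fun G E => G ⊆ E) C a).card) := by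
    rw [← Finset.add_sum_erase _ _ hG0D]
    apply Odd.add_even
    · obtain ⟨E₁, hE₁⟩ := scarf_outer r hr s hs hsmin hsmax hT i0
      have : Finset.bipartiteAbove (fun G E => G ⊆ E) C G0 = {E₁} := by
        ext E
        simp only [Finset.bipartiteAbove, hC, Finset.mem_filter, Finset.mem_univ, true_and,
          Finset.mem_singleton]
        rw [← hE₁ E]
        tauto
      rw [this]; simp
    · refine Finset.even_sum _ fun G hG => ?_
      have hGne := Finset.ne_of_mem_erase hG
      have hGD := Finset.mem_of_mem_erase hG
      simp only [hD, Finset.mem_filter, Finset.mem_univ, true_and] at hGD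
      obtain ⟨E₁, E₂, hne, hEE⟩ := scarf_door r hr s hsmin hsmax G hGD.2.1 hGD.1 (by
        by_contra hns
        push Not at hns
        apply hGne
        symm
        apply Finset.eq_of_subset_of_card_le
        · intro w hw
          obtain ⟨j, hj, rfl⟩ := Finset.mem_image.1 hw
          obtain ⟨e, he, hle⟩ := hGD.2.2 j (Finset.ne_of_mem_erase hj)
          obtain ⟨k, rfl⟩ := hns e he
          rw [hl] at hle
          exact hle ▸ he
        · simp only [hD, Finset.mem_filter, Finset.mem_univ, true_and] at hG0D
          have := hG0D.2.1
          omega)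
      have : Finset.bipartiteAbove (fun G E => G ⊆ E) C G = {E₁, E₂} := by
        ext E
        simp only [Finset.bipartiteAbove, hC, Finset.mem_filter, Finset.mem_univ, true_and,
          Finset.mem_singleton, Finset.mem_insert]
        rw [← hEE E]
        tauto
      rw [this, Finset.card_pair hne]
      exact even_two
  rw [hdc] at hodd
  exact (Nat.not_even_iff_odd.2 hodd) heven

theorem brouwer_approx {n : ℕ} [NeZero n] (f : (Fin n → ℝ) → (Fin n → ℝ))
    (hf : ContinuousOn f (stdSimplex ℝ (Fin n)))
    (hmap : ∀ x ∈ stdSimplex ℝ (Fin n), f x ∈ stdSimplex ℝ (Fin n)) (N : ℕ) (hN : 0 < N) :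
    ∃ D : Fin n → (Fin n → ℝ), ∃ d0 ∈ stdSimplex ℝ (Fin n),
      ∀ i, D i ∈ stdSimplex ℝ (Fin n) ∧ (∀ k, |D i k - d0 k| ≤ n / N) ∧
        d0 i - n / N ≤ f (D i) i := by
  classical
  let T := {a : Fin n → Fin (N + 1) // ∑ i, (a i : ℕ) = N}
  let W := T ⊕ Fin n
  let pt : T → (Fin n → ℝ) := fun t i => ((t.1 i : ℕ) : ℝ) / N
  have hN' : (0 : ℝ) < N := by exact_mod_cast hN
  have hpt : ∀ t, pt t ∈ stdSimplex ℝ (Fin n) := by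
    intro t
    refine ⟨fun i => by positivity, ?_⟩
    simp only [pt]
    rw [← Finset.sum_div, ← Nat.cast_sum, t.2, div_self hN'.ne']
  have hlab : ∀ t : T, ∃ i, pt t i ≤ f (pt t) i := by
    intro t
    obtain ⟨i, -, hi⟩ := Finset.exists_le_of_sum_le (s := (Finset.univ : Finset (Fin n)))
      (f := pt t) (g := f (pt t)) ⟨0, Finset.mem_univ _⟩
      (by rw [(hpt t).2, (hmap _ (hpt t)).2])
    exact ⟨i, hi⟩
  choose lab hlab using hlab
  let key : Fin n → W → ℕ := fun i w => Sum.elim (fun t : T => (t.1 i : ℕ) + 1)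
    (fun j => if j = i then 0 else N + 2) w
  let M := Fintype.card W
  let eq : W ≃ Fin M := Fintype.equivFin W
  let r : Fin n → W → ℕ ×ₗ Fin M := fun i w => toLex (key i w, eq w)
  have hlt : ∀ i a b, key i a < key i b → r i a < r i b := by
    intro i a b h
    exact Prod.Lex.toLex_lt_toLex.2 (Or.inl h)
  have hr : ∀ i, Function.Injective (r i) := by
    intro i a b h
    have h2 : (key i a, eq a) = (key i b, eq b) := toLex.injective h
    exact eq.injective (Prod.mk.inj h2).2
  have key_inr : ∀ i, key i (Sum.inr i) = 0 := fun i => by simp [key]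
  have key_inr' : ∀ i j, j ≠ i → key i (Sum.inr j) = N + 2 := fun i j h => by simp [key, h]
  have key_inl : ∀ i t, key i (Sum.inl t) = (t.1 i : ℕ) + 1 := fun i t => by simp [key]
  have hT0 : Nonempty T := by
    refine ⟨⟨fun i => if i = 0 then Fin.last N else 0, ?_⟩⟩
    rw [Finset.sum_eq_single 0]
    · simp
    · intro b _ hb; simp [hb]
    · simp
  obtain ⟨E, hEc, hEd, hEl⟩ := scarf_lemma r hr (fun i => (Sum.inr i : W)) Sum.inr_injective
    (by
      intro i w
      by_cases hw : w = Sum.inr i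
      · rw [hw]
      · refine (hlt i _ _ ?_).le
        rw [key_inr]
        rcases w with t | j
        · rw [key_inl]; omega
        · rw [key_inr' i j (by rintro rfl; exact hw rfl)]; omega)
    (by
      intro i j w hij hw
      apply hlt
      rw [key_inr' i j hij.symm]
      rcases w with t | k
      · rw [key_inl]
        have := (t.1 i).2
        omega
      · exact absurd ⟨k, rfl⟩ hw)
    (by
      obtain ⟨t⟩ := hT0
      exact ⟨Sum.inl t, by simp⟩)
    (Sum.elim lab id) (fun i => rfl)
  -- some grid point lies in `E`
  have hex : ∃ t : T, Sum.inl t ∈ E := by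
    by_contra hno
    push Not at hno
    obtain ⟨t⟩ := hT0
    obtain ⟨i, hi⟩ := hEd (Sum.inl t)
    obtain ⟨e, he, hle⟩ := hEl i
    rcases e with t' | j
    · exact hno _ he
    · have : j = i := hle
      subst this
      have := hi _ he
      exact absurd (hlt j (Sum.inr j) (Sum.inl t) (by rw [key_inr, key_inl]; omega)) (not_lt.2 this)
  obtain ⟨t0, ht0⟩ := hex
  let S : Finset (Fin n) := Finset.univ.filter (fun i => (Sum.inr i : W) ∉ E)
  have hmin : ∀ i, ∃ t : T, Sum.inl t ∈ E ∧ ∀ t' : T, Sum.inl t' ∈ E → (t.1 i : ℕ) ≤ t'.1 i := by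
    intro i
    obtain ⟨t, ht, htm⟩ := Finset.exists_min_image
      (Finset.univ.filter (fun t : T => (Sum.inl t : W) ∈ E)) (fun t => (t.1 i : ℕ))
      ⟨t0, by simpa using ht0⟩
    simp only [Finset.mem_filter, Finset.mem_univ, true_and] at ht htm
    exact ⟨t, ht, htm⟩
  choose m hmE hm using hmin
  have hsum : N < ∑ i ∈ S, ((m i).1 i + 1 : ℕ) := by
    by_contra hle
    push Not at hle
    -- build a grid point strictly better in every coordinate of `S`
    have hbuild : ∃ b : Fin n → ℕ, ∑ i, b i = N ∧ ∀ i ∈ S, ((m i).1 i : ℕ) + 1 ≤ b i := by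
      refine ⟨fun i => (if i ∈ S then ((m i).1 i : ℕ) + 1 else 0) +
        (if i = 0 then N - ∑ i ∈ S, ((m i).1 i + 1 : ℕ) else 0), ?_, ?_⟩
      · rw [Finset.sum_add_distrib, Finset.sum_ite_mem, Finset.univ_inter,
          Finset.sum_ite_eq' Finset.univ (0 : Fin n)]
        simp only [Finset.mem_univ, if_true]
        omega
      · intro i hi
        simp [hi]
    obtain ⟨b, hbs, hb⟩ := hbuild
    have hbN : ∀ i, b i < N + 1 := by
      intro i
      have := Finset.single_le_sum (f := b) (fun _ _ => Nat.zero_le _) (Finset.mem_univ i)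
      omega
    let t : T := ⟨fun i => ⟨b i, hbN i⟩, hbs⟩
    obtain ⟨i, hi⟩ := hEd (Sum.inl t)
    by_cases hiS : i ∈ S
    · have h1 := hi _ (hmE i)
      refine absurd (hlt i (Sum.inl (m i)) (Sum.inl t) ?_) (not_lt.2 h1)
      rw [key_inl, key_inl]
      have := hb i hiS
      show _ + 1 < b i + 1
      omega
    · have hiE : (Sum.inr i : W) ∈ E := by
        by_contra h
        exact hiS (by simpa [S] using h)
      have h1 := hi _ hiE
      exact absurd (hlt i (Sum.inr i) (Sum.inl t) (by rw [key_inr, key_inl]; omega)) (not_lt.2 h1)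
  have hScard : S.card ≤ n := by
    simpa using Finset.card_le_univ S
  have hsplit : ∀ t : T, Sum.inl t ∈ E →
      ∑ i ∈ S, ((t.1 i : ℕ) - ((m i).1 i : ℕ)) + ∑ i ∈ Sᶜ, (t.1 i : ℕ) < n := by
    intro t ht
    have h1 : ∑ i ∈ S, ((t.1 i : ℕ) - ((m i).1 i : ℕ)) + ∑ i ∈ S, ((m i).1 i : ℕ) =
        ∑ i ∈ S, (t.1 i : ℕ) := by
      rw [← Finset.sum_add_distrib]
      exact Finset.sum_congr rfl fun i _ => Nat.sub_add_cancel (hm i t ht)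
    have h2 : ∑ i ∈ S, (t.1 i : ℕ) + ∑ i ∈ Sᶜ, (t.1 i : ℕ) = N := by
      rw [Finset.sum_add_sum_compl, t.2]
    rw [Finset.sum_add_distrib] at hsum
    simp only [Finset.sum_const, smul_eq_mul, mul_one] at hsum
    omega
  have hinS : ∀ t : T, Sum.inl t ∈ E → ∀ i ∈ S, (t.1 i : ℕ) < (m i).1 i + n := by
    intro t ht i hi
    have := Finset.single_le_sum (f := fun i => (t.1 i : ℕ) - ((m i).1 i : ℕ))
      (fun _ _ => Nat.zero_le _) hi
    have h2 := hsplit t ht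
    omega
  have hninS : ∀ t : T, Sum.inl t ∈ E → ∀ i, i ∉ S → (t.1 i : ℕ) < n := by
    intro t ht i hi
    have := Finset.single_le_sum (f := fun i => (t.1 i : ℕ))
      (fun _ _ => Nat.zero_le _) (Finset.mem_compl.2 hi)
    have h2 := hsplit t ht
    omega
  have hdiff : ∀ t t' : T, Sum.inl t ∈ E → Sum.inl t' ∈ E → ∀ i,
      |pt t i - pt t' i| ≤ n / N := by
    intro t t' ht ht' i
    simp only [pt]
    rw [← sub_div, abs_div, abs_of_pos hN']
    apply div_le_div_of_nonneg_right _ hN'.le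
    have : (t.1 i : ℕ) ≤ t'.1 i + n ∧ (t'.1 i : ℕ) ≤ t.1 i + n := by
      by_cases hi : i ∈ S
      · have h1 := hinS t ht i hi
        have h2 := hinS t' ht' i hi
        have h3 := hm i t ht
        have h4 := hm i t' ht'
        omega
      · have h1 := hninS t ht i hi
        have h2 := hninS t' ht' i hi
        omega
    obtain ⟨h1, h2⟩ := this
    have h1' : ((t.1 i : ℕ) : ℝ) ≤ (t'.1 i : ℕ) + n := by exact_mod_cast h1
    have h2' : ((t'.1 i : ℕ) : ℝ) ≤ (t.1 i : ℕ) + n := by exact_mod_cast h2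
    rw [abs_le]
    constructor <;> linarith
  have hfin : ∀ i, ∃ d : T, Sum.inl d ∈ E ∧ pt t0 i - n / N ≤ f (pt d) i := by
    intro i
    obtain ⟨e, he, hle⟩ := hEl i
    rcases e with t | j
    · have hlt' : lab t = i := hle
      refine ⟨t, he, ?_⟩
      have h1 := hlab t
      rw [hlt'] at h1
      have h2 := hdiff t0 t ht0 he i
      have := (abs_le.1 h2).2
      linarith
    · have hji : j = i := hle
      subst hji
      refine ⟨t0, ht0, ?_⟩
      have h1 : (t0.1 j : ℕ) < n := hninS t0 ht0 j (by simpa [S] using he)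
      have h2 : pt t0 j ≤ n / N := by
        simp only [pt]
        apply div_le_div_of_nonneg_right _ hN'.le
        exact_mod_cast h1.le
      have h3 := (hmap _ (hpt t0)).1 j
      linarith
  choose d hdE hd using hfin
  exact ⟨fun i => pt (d i), pt t0, hpt _, fun i => ⟨hpt _, fun k => hdiff _ _ (hdE i) ht0 k, hd i⟩⟩

theorem brouwer_simplex {n : ℕ} [NeZero n] (f : (Fin n → ℝ) → (Fin n → ℝ))
    (hf : ContinuousOn f (stdSimplex ℝ (Fin n)))
    (hmap : ∀ x ∈ stdSimplex ℝ (Fin n), f x ∈ stdSimplex ℝ (Fin n)) :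
    ∃ x ∈ stdSimplex ℝ (Fin n), f x = x := by
  classical
  have hcpt : IsCompact (stdSimplex ℝ (Fin n)) := isCompact_stdSimplex ℝ (Fin n)
  have H : ∀ N : ℕ, ∃ D : Fin n → (Fin n → ℝ), ∃ d0 ∈ stdSimplex ℝ (Fin n),
      ∀ i, D i ∈ stdSimplex ℝ (Fin n) ∧ (∀ k, |D i k - d0 k| ≤ n / ((N + 1 : ℕ) : ℝ)) ∧
        d0 i - n / ((N + 1 : ℕ) : ℝ) ≤ f (D i) i := fun N =>
    brouwer_approx f hf hmap (N + 1) (Nat.succ_pos N)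
  choose D d0 hd0 hD using H
  obtain ⟨x, hx, φ, hφ, hlim⟩ := hcpt.tendsto_subseq hd0
  have hzero : Filter.Tendsto (fun N : ℕ => (n : ℝ) / ((φ N + 1 : ℕ) : ℝ)) Filter.atTop (nhds 0) := by
    have h1 : Filter.Tendsto (fun N : ℕ => (n : ℝ) / ((N + 1 : ℕ) : ℝ)) Filter.atTop (nhds 0) :=
      (tendsto_const_div_atTop_nhds_zero_nat (n : ℝ)).comp (Filter.tendsto_add_atTop_nat 1)
    exact h1.comp hφ.tendsto_atTop
  have hDlim : ∀ i, Filter.Tendsto (fun N => D (φ N) i) Filter.atTop (nhds x) := by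
    intro i
    rw [tendsto_pi_nhds]
    intro k
    have h1 : Filter.Tendsto (fun N => d0 (φ N) k) Filter.atTop (nhds (x k)) :=
      (tendsto_pi_nhds.1 hlim) k
    have h2 : Filter.Tendsto (fun N => D (φ N) i k - d0 (φ N) k) Filter.atTop (nhds 0) :=
      squeeze_zero_norm (fun N => (hD (φ N) i).2.1 k) hzero
    simpa using h2.add h1
  have hle : ∀ i, x i ≤ f x i := by
    intro i
    have h1 : Filter.Tendsto (fun N => f (D (φ N) i)) Filter.atTop (nhds (f x)) := by
      refine (hf x hx).tendsto.comp ?_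
      exact tendsto_nhdsWithin_iff.2 ⟨hDlim i, Filter.Eventually.of_forall fun N => (hD _ i).1⟩
    have h2 := (tendsto_pi_nhds.1 h1) i
    have h3 : Filter.Tendsto (fun N => d0 (φ N) i - (n : ℝ) / ((φ N + 1 : ℕ) : ℝ)) Filter.atTop
        (nhds (x i - 0)) := ((tendsto_pi_nhds.1 hlim) i).sub hzero
    rw [sub_zero] at h3
    exact le_of_tendsto_of_tendsto' h3 h2 (fun N => (hD (φ N) i).2.2)
  refine ⟨x, hx, ?_⟩
  have hsum : ∑ i, x i = ∑ i, f x i := by rw [hx.2, (hmap x hx).2]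
  have := (Finset.sum_eq_sum_iff_of_le (fun i _ => hle i)).1 hsum
  funext i
  exact (this i (Finset.mem_univ i)).symm

theorem prod_fixed_approx {I Y : Type*} [NormedAddCommGroup Y] [NormedSpace ℝ Y]
    (X : I → Set Y) (hXne : ∀ i, (X i).Nonempty) (hXcpt : ∀ i, IsCompact (X i))
    (hXconv : ∀ i, Convex ℝ (X i)) (g : ((j : I) → X j) → ((j : I) → X j)) (hg : Continuous g)
    (J : Finset I) (ε : ℝ) (hε : 0 < ε) :
    ∃ x, ∑ j ∈ J, dist (x j) (g x j) ≤ ε := by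
  classical
  have : ∀ i, CompactSpace (X i) := fun i => isCompact_iff_compactSpace.1 (hXcpt i)
  have hne : Nonempty ((j : I) → X j) := ⟨fun j => ⟨_, (hXne j).some_mem⟩⟩
  let ρ : ((j : I) → X j) → ((j : I) → X j) → ℝ := fun x y => ∑ j ∈ J, dist (x j) (y j)
  have hρc : ∀ c, Continuous fun x => ρ x c := by
    intro c
    refine continuous_finsetSum _ fun j _ => ?_
    exact (continuous_apply j).dist continuous_const
  obtain ⟨t, ht⟩ := isCompact_univ.elim_finite_subcover (fun c => {x | ρ x c < ε})
    (fun c => isOpen_lt (hρc c) continuous_const) (by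
      intro x _
      refine Set.mem_iUnion.2 ⟨x, ?_⟩
      simpa [ρ] using hε)
  have htne : t.Nonempty := by
    obtain ⟨x⟩ := hne
    have := ht (Set.mem_univ x)
    simp only [Set.mem_iUnion] at this
    obtain ⟨c, hc, -⟩ := this
    exact ⟨c, hc⟩
  let n := t.card
  have : NeZero n := ⟨(Finset.card_pos.2 htne).ne'⟩
  let e : Fin n ≃ t := t.equivFin.symm
  let c : Fin n → ((j : I) → X j) := fun k => (e k).1
  have hcov : ∀ x, ∃ k, ρ x (c k) < ε := by
    intro x
    have := ht (Set.mem_univ x)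
    simp only [Set.mem_iUnion] at this
    obtain ⟨d, hd, hlt⟩ := this
    refine ⟨e.symm ⟨d, hd⟩, ?_⟩
    simpa [c] using hlt
  let lam : Fin n → ((j : I) → X j) → ℝ := fun k x => max 0 (ε - ρ x (c k))
  have hlamc : ∀ k, Continuous (lam k) := fun k =>
    continuous_const.max (continuous_const.sub (hρc (c k)))
  have hlam0 : ∀ k x, 0 ≤ lam k x := fun k x => le_max_left _ _
  have hLam : ∀ x, 0 < ∑ k, lam k x := by
    intro x
    obtain ⟨k, hk⟩ := hcov x
    refine Finset.sum_pos' (fun k _ => hlam0 k x) ⟨k, Finset.mem_univ _, ?_⟩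
    exact lt_max_of_lt_right (by linarith)
  let comb : stdSimplex ℝ (Fin n) → ((j : I) → X j) := fun s j =>
    ⟨∑ k, s.1 k • (c k j : Y), (hXconv j).sum_mem (fun k _ => s.2.1 k) s.2.2
      (fun k _ => (c k j).2)⟩
  have hcomb : Continuous comb := by
    refine continuous_pi fun j => ?_
    refine Continuous.subtype_mk ?_ _
    refine continuous_finsetSum _ fun k _ => ?_
    exact ((continuous_apply k).comp continuous_subtype_val).smul continuous_const
  let F : stdSimplex ℝ (Fin n) → (Fin n → ℝ) := fun s k =>
    lam k (g (comb s)) / ∑ k', lam k' (g (comb s))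
  have hF : Continuous F := by
    refine continuous_pi fun k => ?_
    refine Continuous.div ((hlamc k).comp (hg.comp hcomb)) ?_ (fun s => (hLam _).ne')
    exact continuous_finsetSum _ fun k _ => (hlamc k).comp (hg.comp hcomb)
  have hFm : ∀ s, F s ∈ stdSimplex ℝ (Fin n) := by
    intro s
    refine ⟨fun k => div_nonneg (hlam0 _ _) (hLam _).le, ?_⟩
    simp only [F]
    rw [← Finset.sum_div, div_self (hLam _).ne']
  obtain ⟨s, hs, hfs⟩ := brouwer_simplex
    (fun s => if h : s ∈ stdSimplex ℝ (Fin n) then F ⟨s, h⟩ else s)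
    (by
      rw [continuousOn_iff_continuous_domRestrict]
      convert hF using 1
      funext s
      simp)
    (by
      intro x hx
      simp only [hx, dif_pos]
      exact hFm _)
  simp only [hs, dif_pos] at hfs
  set s' : stdSimplex ℝ (Fin n) := ⟨s, hs⟩ with hs'
  refine ⟨comb s', ?_⟩
  have hpos : ∀ k, s k * ρ (g (comb s')) (c k) ≤ s k * ε := by
    intro k
    rcases (hs.1 k).eq_or_lt with h0 | h0
    · simp [← h0]
    · refine mul_le_mul_of_nonneg_left ?_ h0.le
      by_contra hlt
      push Not at hlt
      have : lam k (g (comb s')) = 0 := max_eq_left (by linarith)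
      have h1 : F s' k = 0 := by simp only [F, this, zero_div]
      rw [hfs] at h1
      exact h0.ne' h1
  calc ∑ j ∈ J, dist (comb s' j) (g (comb s') j)
      ≤ ∑ j ∈ J, ∑ k, s k * dist (g (comb s') j) (c k j) := by
        refine Finset.sum_le_sum fun j _ => ?_
        have h1 : (comb s' j : Y) - g (comb s') j =
            ∑ k, s k • ((c k j : Y) - g (comb s') j) := by
          simp only [smul_sub, Finset.sum_sub_distrib, ← Finset.sum_smul]
          rw [hs.2, one_smul]
        rw [Subtype.dist_eq, dist_eq_norm, h1]
        refine (norm_sum_le _ _).trans (Finset.sum_le_sum fun k _ => ?_)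
        rw [norm_smul, Real.norm_of_nonneg (hs.1 k), dist_comm, Subtype.dist_eq, dist_eq_norm]
    _ = ∑ k, s k * ρ (g (comb s')) (c k) := by
        rw [Finset.sum_comm]
        simp only [ρ, Finset.mul_sum]
    _ ≤ ∑ k, s k * ε := Finset.sum_le_sum fun k _ => hpos k
    _ = ε := by rw [← Finset.sum_mul, hs.2, one_mul]

theorem prod_fixed {I Y : Type*} [NormedAddCommGroup Y] [NormedSpace ℝ Y]
    (X : I → Set Y) (hXne : ∀ i, (X i).Nonempty) (hXcpt : ∀ i, IsCompact (X i))
    (hXconv : ∀ i, Convex ℝ (X i)) (g : ((j : I) → X j) → ((j : I) → X j)) (hg : Continuous g) :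
    ∃ x, g x = x := by
  classical
  have : ∀ i, CompactSpace (X i) := fun i => isCompact_iff_compactSpace.1 (hXcpt i)
  let K : Finset I × ℕ → Set ((j : I) → X j) := fun p =>
    {x | ∑ j ∈ p.1, dist (x j) (g x j) ≤ 1 / ((p.2 : ℝ) + 1)}
  have hKcl : ∀ p, IsClosed (K p) := by
    intro p
    refine isClosed_le ?_ continuous_const
    exact continuous_finsetSum _ fun j _ =>
      (continuous_apply j).dist ((continuous_apply j).comp hg)
  obtain ⟨x, hx⟩ := IsCompact.nonempty_iInter_of_directed_nonempty_isCompact_isClosed K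
    (by
      intro p q
      refine ⟨p ⊔ q, ?_, ?_⟩
      · intro x hx
        refine le_trans (Finset.sum_le_sum_of_subset_of_nonneg ?_ (fun _ _ _ => dist_nonneg))
          (le_trans hx ?_)
        · exact Finset.subset_union_left
        · apply one_div_le_one_div_of_le (by positivity)
          have : p.2 ≤ (p ⊔ q).2 := le_sup_left
          have : (p.2 : ℝ) ≤ ((p ⊔ q).2 : ℝ) := by exact_mod_cast this
          linarith
      · intro x hx
        refine le_trans (Finset.sum_le_sum_of_subset_of_nonneg ?_ (fun _ _ _ => dist_nonneg))
          (le_trans hx ?_)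
        · exact Finset.subset_union_right
        · apply one_div_le_one_div_of_le (by positivity)
          have : q.2 ≤ (p ⊔ q).2 := le_sup_right
          have : (q.2 : ℝ) ≤ ((p ⊔ q).2 : ℝ) := by exact_mod_cast this
          linarith)
    (fun p => prod_fixed_approx X hXne hXcpt hXconv g hg p.1 _ (by positivity))
    (fun p => (hKcl p).isCompact) hKcl
  refine ⟨x, ?_⟩
  funext j
  symm
  apply eq_of_dist_eq_zero
  refine le_antisymm ?_ dist_nonneg
  refine ge_of_tendsto' tendsto_one_div_add_atTop_nhds_zero_nat (fun N : ℕ => ?_)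
  have := Set.mem_iInter.1 hx ({j}, N)
  simpa [K] using this

theorem lsc_ball {Z Y : Type*} [TopologicalSpace Z] [NormedAddCommGroup Y]
    (Φ : Z → Set Y) (h : LSCCorr Φ) (f : Z → Y) (hf : Continuous f) (ε : ℝ) :
    LSCCorr (fun x => Φ x ∩ Metric.ball (f x) ε) := by
  intro V hV
  rw [isOpen_iff_mem_nhds]
  rintro x ⟨y, ⟨hy, hyb⟩, hyV⟩
  set δ := (ε - dist y (f x)) / 2 with hδ
  have hyb' : dist y (f x) < ε := hyb
  have hδ0 : 0 < δ := by rw [hδ]; linarith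
  have h1 := (h (V ∩ Metric.ball y δ) (hV.inter Metric.isOpen_ball)).mem_nhds
    (show x ∈ {x | (Φ x ∩ (V ∩ Metric.ball y δ)).Nonempty} from
      ⟨y, hy, hyV, Metric.mem_ball_self hδ0⟩)
  have h2 := hf.continuousAt.preimage_mem_nhds (Metric.ball_mem_nhds (f x) hδ0)
  filter_upwards [h1, h2] with x' h1' h2'
  obtain ⟨y', hy', hyV', hyd⟩ := h1'
  refine ⟨y', ⟨hy', ?_⟩, hyV'⟩
  have h3 : dist y' y < δ := hyd
  have h4 : dist (f x') (f x) < δ := h2'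
  have h5 : dist y' (f x') ≤ dist y' y + dist y (f x) + dist (f x) (f x') :=
    dist_triangle4 _ _ _ _
  rw [dist_comm (f x) (f x')] at h5
  show dist y' (f x') < ε
  linarith

theorem approx_sel {Z Y : Type*} [TopologicalSpace Z] [NormalSpace Z] [ParacompactSpace Z]
    [NormedAddCommGroup Y] [NormedSpace ℝ Y]
    (Φ : Z → Set Y) (h : LSCCorr Φ) (hne : ∀ x, (Φ x).Nonempty) (hc : ∀ x, Convex ℝ (Φ x))
    (ε : ℝ) (hε : 0 < ε) :
    ∃ f : C(Z, Y), ∀ x, (Φ x ∩ Metric.ball (f x) ε).Nonempty := by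
  obtain ⟨f, hf⟩ := exists_continuous_forall_mem_convex_of_local_const
    (t := fun x => Metric.thickening ε (Φ x)) (fun x => (hc x).thickening ε) (by
      intro x
      obtain ⟨y, hy⟩ := hne x
      refine ⟨y, ?_⟩
      filter_upwards [(h _ (Metric.isOpen_ball (x := y) (ε := ε))).mem_nhds
        (show x ∈ {x | (Φ x ∩ Metric.ball y ε).Nonempty} from ⟨y, hy, Metric.mem_ball_self hε⟩)]
        with x' hx'
      obtain ⟨z, hz, hzb⟩ := hx'
      exact Metric.mem_thickening_iff.2 ⟨z, hz, by rw [dist_comm]; exact hzb⟩)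
  refine ⟨f, fun x => ?_⟩
  obtain ⟨z, hz, hd⟩ := Metric.mem_thickening_iff.1 (hf x)
  exact ⟨z, hz, by rw [Metric.mem_ball, dist_comm]; exact hd⟩

theorem michael_closure {Z Y : Type*} [TopologicalSpace Z] [NormalSpace Z] [ParacompactSpace Z]
    [NormedAddCommGroup Y] [NormedSpace ℝ Y] [CompleteSpace Y]
    (Φ : Z → Set Y) (h : LSCCorr Φ) (hne : ∀ x, (Φ x).Nonempty) (hc : ∀ x, Convex ℝ (Φ x)) :
    ∃ f : Z → Y, Continuous f ∧ ∀ x, f x ∈ closure (Φ x) := by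
  have hpos : ∀ n : ℕ, (0 : ℝ) < (1 / 2) ^ n := fun n => by positivity
  let S := fun n : ℕ => {f : C(Z, Y) // ∀ x, (Φ x ∩ Metric.ball (f x) ((1 / 2) ^ n)).Nonempty}
  have step : ∀ n (f : S n), ∃ f' : S (n + 1), ∀ x,
      dist (f.1 x) (f'.1 x) ≤ 2 * (1 / 2) ^ n := by
    intro n f
    obtain ⟨f', hf'⟩ := approx_sel (fun x => Φ x ∩ Metric.ball (f.1 x) ((1 / 2) ^ n))
      (lsc_ball Φ h f.1 f.1.continuous _) f.2 (fun x => (hc x).inter (convex_ball _ _))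
      ((1 / 2) ^ (n + 1)) (hpos _)
    refine ⟨⟨f', fun x => ?_⟩, fun x => ?_⟩
    · obtain ⟨y, hy, hyb⟩ := hf' x
      exact ⟨y, hy.1, hyb⟩
    · obtain ⟨y, hy, hyb⟩ := hf' x
      have h1 : dist y (f.1 x) < (1 / 2) ^ n := hy.2
      have h2 : dist y (f' x) < (1 / 2) ^ (n + 1) := hyb
      have h3 := dist_triangle_left (f.1 x) (f' x) y
      have h4 : ((1 : ℝ) / 2) ^ (n + 1) ≤ (1 / 2) ^ n := by
        rw [pow_succ]; linarith [hpos n]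
      show dist (f.1 x) (f' x) ≤ _
      linarith
  choose nxt hnxt using step
  obtain ⟨f0, hf0⟩ := approx_sel Φ h hne hc ((1 / 2) ^ 0) (hpos 0)
  let F : (n : ℕ) → S n := fun n => Nat.rec ⟨f0, hf0⟩ (fun n f => nxt n f) n
  have hF : ∀ n x, dist ((F n).1 x) ((F (n + 1)).1 x) ≤ 2 * (1 / 2) ^ n := fun n x => hnxt n _ x
  have hlim : ∀ x, ∃ y, Filter.Tendsto (fun n => (F n).1 x) Filter.atTop (nhds y) := fun x =>
    cauchySeq_tendsto_of_complete
      (cauchySeq_of_le_geometric (1 / 2) 2 (by norm_num) (fun n => hF n x))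
  choose f hf using hlim
  have hdist : ∀ n x, dist ((F n).1 x) (f x) ≤ 2 * (1 / 2) ^ n / (1 - 1 / 2) := fun n x =>
    dist_le_of_le_geometric_of_tendsto (1 / 2) 2 (by norm_num) (fun n => hF n x) (hf x) n
  have hz : Filter.Tendsto (fun n : ℕ => 2 * ((1 : ℝ) / 2) ^ n / (1 - 1 / 2)) Filter.atTop
      (nhds 0) := by
    have := (tendsto_pow_atTop_nhds_zero_of_lt_one (r := (1 : ℝ) / 2) (by norm_num)
      (by norm_num)).const_mul 2 |>.div_const (1 - 1 / 2)
    simpa using this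
  refine ⟨f, ?_, ?_⟩
  · have hu : TendstoUniformly (fun n x => (F n).1 x) f Filter.atTop := by
      rw [Metric.tendstoUniformly_iff]
      intro ε hε
      filter_upwards [hz.eventually (gt_mem_nhds hε)] with n hn x
      rw [dist_comm]
      exact (hdist n x).trans_lt hn
    exact hu.continuous (Filter.Frequently.of_forall fun n => (F n).1.continuous)
  · intro x
    have hy : ∀ n, ∃ y ∈ Φ x, dist y ((F n).1 x) < (1 / 2) ^ n := fun n => by
      obtain ⟨y, hy, hyb⟩ := (F n).2 x
      exact ⟨y, hy, hyb⟩
    choose y hyΦ hyd using hy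
    refine mem_closure_of_tendsto (f := y) (b := Filter.atTop) ?_
      (Filter.Eventually.of_forall hyΦ)
    rw [tendsto_iff_dist_tendsto_zero]
    refine squeeze_zero (fun _ => dist_nonneg)
      (fun n => (dist_triangle (y n) ((F n).1 x) (f x)).trans
        (add_le_add (hyd n).le (hdist n x))) ?_
    have := (tendsto_pow_atTop_nhds_zero_of_lt_one (r := (1 : ℝ) / 2) (by norm_num)
      (by norm_num)).add hz
    simpa using this

theorem mem_of_sep {E : Type*} [NormedAddCommGroup E] [NormedSpace ℝ E] [FiniteDimensional ℝ E]
    (C : Set E) (hC : Convex ℝ C) (hne : C.Nonempty) (c : E)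
    (h : ∀ p : E →L[ℝ] ℝ, (∀ y ∈ C, p c ≤ p y) → ∀ y ∈ C, p y = p c) : c ∈ C := by
  by_contra hc
  let K : Set E := {z | ∃ t : ℝ, 0 < t ∧ ∃ y ∈ C, z = t • (y - c)}
  have hK0 : (0 : E) ∉ K := by
    rintro ⟨t, ht, y, hy, h0⟩
    rcases smul_eq_zero.1 h0.symm with h1 | h1
    · exact ht.ne' h1
    · rw [sub_eq_zero] at h1
      exact hc (h1 ▸ hy)
  have hKs : ∀ z ∈ K, ∀ a : ℝ, 0 < a → a • z ∈ K := by
    rintro z ⟨t, ht, y, hy, rfl⟩ a ha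
    exact ⟨a * t, mul_pos ha ht, y, hy, by rw [mul_smul]⟩
  have hKa : ∀ z ∈ K, ∀ w ∈ K, z + w ∈ K := by
    rintro z ⟨t, ht, y, hy, rfl⟩ w ⟨t', ht', y', hy', rfl⟩
    have hs : 0 < t + t' := by linarith
    refine ⟨t + t', hs, (t / (t + t')) • y + (t' / (t + t')) • y',
      hC hy hy' (by positivity) (by positivity) (by field_simp), ?_⟩
    rw [smul_sub (t + t'), smul_add, smul_smul, smul_smul, mul_div_cancel₀ _ hs.ne',
      mul_div_cancel₀ _ hs.ne', smul_sub, smul_sub, add_smul]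
    abel
  have hKc : Convex ℝ K := by
    rw [convex_iff_forall_pos]
    intro x hx y hy a b ha hb _
    exact hKa _ (hKs x hx a ha) _ (hKs y hy b hb)
  let V := Submodule.span ℝ K
  let K' : Set V := (↑) ⁻¹' K
  have hK'c : Convex ℝ K' := hKc.linear_preimage V.subtype
  obtain ⟨y0, hy0⟩ := hne
  have hy0K : y0 - c ∈ K := ⟨1, one_pos, y0, hy0, by simp⟩
  have hK'ne : K'.Nonempty := ⟨⟨y0 - c, Submodule.subset_span hy0K⟩, hy0K⟩
  have hspan : affineSpan ℝ K' = ⊤ := by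
    rw [AffineSubspace.affineSpan_eq_top_iff_vectorSpan_eq_top_of_nonempty ℝ V V hK'ne, eq_top_iff]
    have h1 : Submodule.span ℝ K' = ⊤ := Submodule.span_span_coe_preimage
    rw [← h1, Submodule.span_le]
    intro k hk
    have h2 : (2 : ℝ) • k ∈ K' := hKs _ hk 2 two_pos
    have h3 := vsub_mem_vectorSpan ℝ h2 hk
    have h4 : (2 : ℝ) • k -ᵥ k = k := by
      rw [vsub_eq_sub, two_smul]; abel
    rw [h4] at h3
    exact h3
  have hint : (interior K').Nonempty := hK'c.interior_nonempty_iff_affineSpan_eq_top.2 hspan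
  obtain ⟨f, hf⟩ := geometric_hahn_banach_open_point hK'c.interior isOpen_interior
    (x := (0 : V)) (fun h0 => hK0 (show (0 : V) ∈ K' from interior_subset h0))
  have hfle : ∀ k ∈ K', f k ≤ 0 := by
    have hcl : closure (interior K') ⊆ {k | f k ≤ 0} := by
      refine closure_minimal ?_ (isClosed_le f.continuous continuous_const)
      intro k hk
      have := hf k hk
      rw [map_zero] at this
      exact this.le
    intro k hk
    refine hcl ?_
    rw [hK'c.closure_interior_eq_closure_of_nonempty_interior hint]
    exact subset_closure hk
  obtain ⟨F, hF⟩ := LinearMap.exists_extend (f : V →ₗ[ℝ] ℝ)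
  have hFv : ∀ v : V, F v = f v := fun v => LinearMap.congr_fun hF v
  have hFK : ∀ z ∈ K, F z ≤ 0 := by
    intro z hz
    have := hfle ⟨z, Submodule.subset_span hz⟩ hz
    rw [← hFv] at this
    exact this
  have hp := h (-(LinearMap.toContinuousLinearMap F)) (by
    intro y hy
    have := hFK (y - c) ⟨1, one_pos, y, hy, by simp⟩
    rw [map_sub] at this
    simp
    linarith)
  obtain ⟨k, hk⟩ := hint
  have hk1 := hf k hk
  rw [map_zero, ← hFv] at hk1
  obtain ⟨t, ht, y, hy, hkt⟩ := interior_subset hk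
  have h2 := hp y hy
  simp at h2
  rw [hkt, map_smul, map_sub, h2, sub_self, smul_zero] at hk1
  exact lt_irrefl _ hk1

theorem michael_fd {Z Y : Type*} [TopologicalSpace Z] [MetrizableSpace Z]
    [NormedAddCommGroup Y] [NormedSpace ℝ Y] [FiniteDimensional ℝ Y]
    (Φ : Z → Set Y) (h : LSCCorr Φ) (hne : ∀ x, (Φ x).Nonempty) (hc : ∀ x, Convex ℝ (Φ x))
    (R : ℝ) (hR : ∀ x, ∀ y ∈ Φ x, ‖y‖ ≤ R) :
    ∃ f : Z → Y, Continuous f ∧ ∀ x, f x ∈ Φ x := by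
  let _ : MetricSpace Z := metrizableSpaceMetric Z
  have : ProperSpace Y := FiniteDimensional.proper_real Y
  have : CompleteSpace Y := FiniteDimensional.complete ℝ Y
  let B : ℕ → ℕ → Set Y := fun n m => Metric.ball (denseSeq Y n) (1 / ((m : ℝ) + 1))
  have hU : ∀ n m, IsOpen {x | (Φ x ∩ B n m).Nonempty} := fun n m => h _ Metric.isOpen_ball
  have hC : ∀ n m, ∃ C : ℕ → Set Z, (∀ k, IsClosed (C k)) ∧
      ⋃ k, C k = {x | (Φ x ∩ B n m).Nonempty} := by
    intro n m
    obtain ⟨C, h1, -, h3, -⟩ := (hU n m).exists_iUnion_isClosed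
    exact ⟨C, h1, h3⟩
  choose C hCcl hCU using hC
  have hsel : ∀ a : ℕ × ℕ × ℕ, ∃ f : Z → Y, Continuous f ∧ ∀ x, f x ∈ closure (Φ x) ∧
      (x ∈ C a.1 a.2.1 a.2.2 → f x ∈ closure (B a.1 a.2.1)) := by
    rintro ⟨n, m, k⟩
    obtain ⟨f, hf, hfx⟩ := michael_closure
      (fun x => {y | y ∈ Φ x ∧ (x ∈ C n m k → y ∈ B n m)})
      (by
        intro V hV
        have : {x | ({y | y ∈ Φ x ∧ (x ∈ C n m k → y ∈ B n m)} ∩ V).Nonempty} =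
            ({x | (Φ x ∩ V).Nonempty} ∩ (C n m k)ᶜ) ∪ {x | (Φ x ∩ (B n m ∩ V)).Nonempty} := by
          ext x
          constructor
          · rintro ⟨y, ⟨hy, hyB⟩, hyV⟩
            by_cases hx : x ∈ C n m k
            · exact Or.inr ⟨y, hy, hyB hx, hyV⟩
            · exact Or.inl ⟨⟨y, hy, hyV⟩, hx⟩
          · rintro (⟨⟨y, hy, hyV⟩, hx⟩ | ⟨y, hy, hyB, hyV⟩)
            · exact ⟨y, ⟨hy, fun h' => absurd h' hx⟩, hyV⟩
            · exact ⟨y, ⟨hy, fun _ => hyB⟩, hyV⟩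
        rw [this]
        exact ((h V hV).inter (hCcl n m k).isOpen_compl).union
          (h _ (Metric.isOpen_ball.inter hV)))
      (by
        intro x
        by_cases hx : x ∈ C n m k
        · have : x ∈ {x | (Φ x ∩ B n m).Nonempty} := hCU n m ▸ Set.mem_iUnion.2 ⟨k, hx⟩
          obtain ⟨y, hy, hyB⟩ := this
          exact ⟨y, hy, fun _ => hyB⟩
        · obtain ⟨y, hy⟩ := hne x
          exact ⟨y, hy, fun h' => absurd h' hx⟩)
      (by
        intro x y₁ h₁ y₂ h₂ a b ha hb hab
        exact ⟨hc x h₁.1 h₂.1 ha hb hab,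
          fun hx => convex_ball _ _ (h₁.2 hx) (h₂.2 hx) ha hb hab⟩)
    refine ⟨f, hf, fun x => ⟨closure_mono (fun y hy => hy.1) (hfx x), fun hx => ?_⟩⟩
    exact closure_mono (fun y hy => hy.2 hx) (hfx x)
  choose f hfc hf using hsel
  let e : ℕ → ℕ × ℕ × ℕ := fun j => (Denumerable.eqv (ℕ × ℕ × ℕ)).symm j
  have he : ∀ a, ∃ j, e j = a := fun a => (Denumerable.eqv (ℕ × ℕ × ℕ)).symm.surjective a
  let w : ℕ → ℝ := fun j => 1 / 2 / 2 ^ j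
  have hw : HasSum w 1 := hasSum_geometric_two' 1
  have hw0 : ∀ j, 0 < w j := fun j => by positivity
  have hfR : ∀ a x, ‖f a x‖ ≤ R := by
    intro a x
    have : closure (Φ x) ⊆ {y | ‖y‖ ≤ R} :=
      closure_minimal (fun y hy => hR x y hy) (isClosed_le continuous_norm continuous_const)
    exact this (hf a x).1
  have hbd : ∀ j x, ‖w j • f (e j) x‖ ≤ w j * R := by
    intro j x
    rw [norm_smul, Real.norm_of_nonneg (hw0 j).le]
    exact mul_le_mul_of_nonneg_left (hfR _ _) (hw0 j).le
  have hsum : Summable fun j => w j * R := hw.summable.mul_right R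
  refine ⟨fun x => ∑' j, w j • f (e j) x, ?_, ?_⟩
  · exact continuous_tsum (fun j => (hfc (e j)).const_smul (w j)) hsum hbd
  · intro x
    refine mem_of_sep _ (hc x) (hne x) _ ?_
    intro p hp y hy
    set c := ∑' j, w j • f (e j) x with hcdef
    have hs1 : HasSum (fun j => w j • f (e j) x) c :=
      (Summable.of_norm_bounded hsum (fun j => hbd j x)).hasSum
    have hs2 : HasSum (fun j => w j * p (f (e j) x)) (p c) := by
      have := hs1.mapL p
      simpa using this
    have hs3 : HasSum (fun j => w j * p c) (p c) := by simpa using hw.mul_right (p c)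
    have hpcl : ∀ z ∈ closure (Φ x), p c ≤ p z := by
      have : closure (Φ x) ⊆ {z | p c ≤ p z} :=
        closure_minimal hp (isClosed_le continuous_const p.continuous)
      exact this
    have hs4 := hs2.sub hs3
    rw [sub_self, hasSum_zero_iff_of_nonneg (fun j => by
      have := mul_le_mul_of_nonneg_left (hpcl _ (hf (e j) x).1) (hw0 j).le
      show (0 : ℝ) ≤ _
      linarith)] at hs4
    have hpe : ∀ a, p (f a x) = p c := by
      intro a
      obtain ⟨j, rfl⟩ := he a
      have := congrFun hs4 j
      simp only [Pi.zero_apply] at this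
      rw [← mul_sub] at this
      rcases mul_eq_zero.1 this with h1 | h1
      · exact absurd h1 (hw0 j).ne'
      · linarith
    by_contra hne'
    have hlt : p c < p y := lt_of_le_of_ne (hp y hy) (Ne.symm hne')
    obtain ⟨δ, hδ, hball⟩ := Metric.isOpen_iff.1 (isOpen_lt continuous_const p.continuous) y hlt
    obtain ⟨m, hm⟩ := exists_nat_one_div_lt (half_pos hδ)
    have hm0 : (0 : ℝ) < 1 / ((m : ℝ) + 1) := by positivity
    obtain ⟨n, hn⟩ := (denseRange_denseSeq Y).exists_dist_lt y hm0
    have hx : x ∈ ⋃ k, C n m k := by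
      rw [hCU]
      exact ⟨y, hy, hn⟩
    obtain ⟨k, hk⟩ := Set.mem_iUnion.1 hx
    have h1 := (hf (n, m, k) x).2 hk
    have h2 := Metric.closure_ball_subset_closedBall h1
    rw [Metric.mem_closedBall] at h2
    have h3 : f (n, m, k) x ∈ Metric.ball y δ := by
      rw [Metric.mem_ball]
      have := dist_triangle_right (f (n, m, k) x) y (denseSeq Y n)
      linarith
    have h4 : p c < p (f (n, m, k) x) := hball h3
    rw [hpe] at h4
    exact lt_irrefl _ h4

theorem player_map {Z Y : Type*} [TopologicalSpace Z] [MetrizableSpace Z]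
    [NormedAddCommGroup Y] [NormedSpace ℝ Y] [FiniteDimensional ℝ Y]
    (X : Set Y) (hXcpt : IsCompact X) (hXconv : Convex ℝ X)
    (pr : Z → Y) (hpr : Continuous pr) (hprX : ∀ x, pr x ∈ X)
    (P : Z → Set Y) (hPX : ∀ x, P x ⊆ X) (hPc : ∀ x, Convex ℝ (P x)) (hirr : ∀ x, pr x ∉ P x)
    (F : Z → Z → Set Y) (O : Z → Set Z)
    (h1 : ∀ z, (P z).Nonempty →
      IsOpen (O z) ∧ z ∈ O z ∧ ∀ x ∈ O z, (F z x).Nonempty ∧ F z x ⊆ P x)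
    (h2 : ∀ z, (P z).Nonempty → LSCCorrOn (fun x => convexHull ℝ (F z x)) (O z)) :
    ∃ g : Z → Y, Continuous g ∧ (∀ x, g x ∈ X) ∧ ∀ x, (P x).Nonempty → g x ≠ pr x := by
  classical
  let _ : MetricSpace Z := metrizableSpaceMetric Z
  obtain ⟨R, hR⟩ := hXcpt.isBounded.exists_norm_le
  let U : Set Z := {x | (P x).Nonempty}
  have hOU : ∀ z, (P z).Nonempty → O z ⊆ U := fun z hz x hx =>
    ((h1 z hz).2.2 x hx).1.mono ((h1 z hz).2.2 x hx).2
  have hUo : IsOpen U := by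
    rw [isOpen_iff_mem_nhds]
    intro z hz
    exact Filter.mem_of_superset ((h1 z hz).1.mem_nhds (h1 z hz).2.1) (hOU z hz)
  obtain ⟨G, hG⟩ := exists_continuous_forall_mem_convex_of_local
    (X := U) (t := fun x => P x.1) (fun x => hPc x.1) (by
      rintro ⟨z, hz⟩
      obtain ⟨hO, hzO, hF⟩ := h1 z hz
      have hconv : ∀ x ∈ O z, convexHull ℝ (F z x) ⊆ P x := fun x hx =>
        convexHull_min (hF x hx).2 (hPc x)
      obtain ⟨f, hfc, hf⟩ := michael_fd (Z := O z) (fun x => convexHull ℝ (F z x.1)) (h2 z hz)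
        (fun x => (hF x.1 x.2).1.convexHull) (fun x => convex_convexHull ℝ _) R
        (fun x y hy => hR y (hPX _ (hconv x.1 x.2 hy)))
      refine ⟨{x : U | x.1 ∈ O z}, (hO.preimage continuous_subtype_val).mem_nhds hzO,
        fun x => if h : x.1 ∈ O z then f ⟨x.1, h⟩ else 0, ?_, ?_⟩
      · rw [continuousOn_iff_continuous_domRestrict]
        have : Continuous (fun x : {x : U | x.1 ∈ O z} => f ⟨x.1.1, x.2⟩) :=
          hfc.comp (Continuous.subtype_mk
            (continuous_subtype_val.comp continuous_subtype_val) _)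
        convert this using 1
        funext x
        have hx : (x.1.1) ∈ O z := x.2
        simp [hx]
      · intro x hx
        have hx' : x.1 ∈ O z := hx
        simp only [hx', dif_pos]
        exact hconv _ hx' (hf ⟨x.1, hx'⟩))
  -- a cut-off function
  have hlam : ∃ lam : Z → ℝ, Continuous lam ∧ (∀ x, 0 ≤ lam x ∧ lam x ≤ 1) ∧
      (∀ x ∈ U, 0 < lam x) ∧ ∀ x, x ∉ U → lam x = 0 := by
    by_cases hUc : (Uᶜ).Nonempty
    · refine ⟨fun x => min 1 (Metric.infDist x Uᶜ),
        continuous_const.min (Metric.continuous_infDist_pt _),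
        fun x => ⟨le_min zero_le_one Metric.infDist_nonneg, min_le_left _ _⟩, ?_, ?_⟩
      · intro x hx
        refine lt_min one_pos ?_
        exact (hUo.isClosed_compl.notMem_iff_infDist_pos hUc).1 (by simpa using hx)
      · intro x hx
        have : Metric.infDist x Uᶜ = 0 := Metric.infDist_zero_of_mem hx
        simp [this]
    · refine ⟨fun _ => 1, continuous_const, fun x => ⟨zero_le_one, le_rfl⟩,
        fun _ _ => one_pos, fun x hx => absurd ⟨x, hx⟩ hUc⟩
  obtain ⟨lam, hlc, hl01, hlpos, hl0⟩ := hlam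
  let H : Z → Y := fun x => if h : x ∈ U then G ⟨x, h⟩ - pr x else 0
  have hHb : ∀ x, ‖H x‖ ≤ 2 * R := by
    intro x
    by_cases hx : x ∈ U
    · simp only [H, hx, dif_pos]
      refine (norm_sub_le _ _).trans ?_
      have := hR _ (hPX _ (hG ⟨x, hx⟩))
      have := hR _ (hprX x)
      linarith
    · simp only [H, hx, dif_neg, not_false_eq_true, norm_zero]
      have := (norm_nonneg _).trans (hR _ (hprX x))
      linarith
  have hcont : Continuous fun x => lam x • H x := by
    rw [continuous_iff_continuousAt]
    intro x
    by_cases hx : x ∈ U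
    · have hHo : ContinuousOn H U := by
        rw [continuousOn_iff_continuous_domRestrict]
        have : Continuous fun x : U => G x - pr x.1 :=
          G.continuous.sub (hpr.comp continuous_subtype_val)
        convert this using 1
        funext y
        simp [H, y.2]
      exact hlc.continuousAt.smul (hHo.continuousAt (hUo.mem_nhds hx))
    · have : lam x • H x = 0 := by rw [hl0 x hx, zero_smul]
      rw [ContinuousAt, this]
      refine squeeze_zero_norm (a := fun y => lam y * (2 * R)) (fun y => ?_) ?_
      · rw [norm_smul, Real.norm_of_nonneg (hl01 y).1]
        exact mul_le_mul_of_nonneg_left (hHb y) (hl01 y).1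
      · have := (hlc.continuousAt (x := x)).tendsto.mul_const (2 * R)
        rwa [hl0 x hx, zero_mul] at this
  refine ⟨fun x => pr x + lam x • H x, hpr.add hcont, ?_, ?_⟩
  · intro x
    by_cases hx : x ∈ U
    · simp only [H, hx, dif_pos]
      have := hXconv (hprX x) (hPX _ (hG ⟨x, hx⟩)) (sub_nonneg.2 (hl01 x).2) (hl01 x).1
        (by ring)
      convert this using 1
      rw [smul_sub, sub_smul, one_smul]
      abel
    · simp only [H, hx, dif_neg, not_false_eq_true, smul_zero, add_zero]
      exact hprX x
  · intro x hx heq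
    have hxU : x ∈ U := hx
    have h0 : lam x • H x = 0 := by simpa using heq
    rcases smul_eq_zero.1 h0 with h | h
    · exact (hlpos x hxU).ne' h
    · simp only [H, hxU, dif_pos] at h
      rw [sub_eq_zero] at h
      exact hirr x (h ▸ hG ⟨x, hxU⟩)

theorem nash_exists {I Y : Type*} [Countable I]
    [NormedAddCommGroup Y] [NormedSpace ℝ Y] [FiniteDimensional ℝ Y]
    (X : I → Set Y) (hXne : ∀ i, (X i).Nonempty) (hXcpt : ∀ i, IsCompact (X i))
    (hXconv : ∀ i, Convex ℝ (X i))
    (P : I → ((j : I) → X j) → Set Y) (hPX : ∀ i x, P i x ⊆ X i)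
    (hPc : ∀ i x, Convex ℝ (P i x)) (hirr : ∀ i x, (x i : Y) ∉ P i x)
    (F : I → ((j : I) → X j) → ((j : I) → X j) → Set Y)
    (O : I → ((j : I) → X j) → Set ((j : I) → X j))
    (h1 : ∀ i z, (P i z).Nonempty →
      IsOpen (O i z) ∧ z ∈ O i z ∧ ∀ x ∈ O i z, (F i z x).Nonempty ∧ F i z x ⊆ P i x)
    (h2 : ∀ i z, (P i z).Nonempty → LSCCorrOn (fun x => convexHull ℝ (F i z x)) (O i z)) :
    ∃ x, ∀ i, ¬ (P i x).Nonempty := by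
  have : MetrizableSpace ((j : I) → X j) := inferInstance
  have hg := fun i => player_map (X i) (hXcpt i) (hXconv i) (fun x : (j : I) → X j => (x i : Y))
    (continuous_subtype_val.comp (continuous_apply i)) (fun x => (x i).2) (P i) (hPX i) (hPc i)
    (hirr i) (F i) (O i) (h1 i) (h2 i)
  choose g hgc hgX hgn using hg
  obtain ⟨x, hx⟩ := prod_fixed X hXne hXcpt hXconv (fun x i => ⟨g i x, hgX i x⟩)
    (continuous_pi fun i => (hgc i).subtype_mk _)
  refine ⟨x, fun i hi => hgn i x hi ?_⟩
  have := congrFun hx i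
  exact congrArg Subtype.val this

/-- **Bayesian equilibrium existence (Theorem 6.9).**  Let `𝓖 = {(Xᵢ,uᵢ,𝓕ᵢ,qᵢ)}` be a
Bayesian game with common information over a complete probability space whose σ-algebra is
generated by a countable measurable partition `A`, with positive priors integrating to one
and positive mass `∫_{E(ω)} qᵢ dμ` on cells, jointly measurable integrably bounded payoffs
`uᵢ`, and conditional expected utilities `hᵢ` given by
`hᵢ(ω,x) = ∫_{E(ω)} qᵢ uᵢ(·,x) dμ / ∫_{E(ω)} qᵢ dμ`.  If each `Xᵢ` is a nonempty compact
convex subset of a separable Banach space, `uᵢ` is concave in the own strategy, each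
`Qᵢ^{uᵢ}` satisfies the (strong) continuous inclusion property, and either `Y` is
finite-dimensional or `𝕂(Qᵢ^{uᵢ}) ≠ ∅` on its domain, then `𝓖` has a Bayesian
equilibrium. -/
theorem stmt_14 {Ω Y I : Type*} [mΩ : MeasurableSpace Ω] (μ : Measure Ω)
    [IsProbabilityMeasure μ] (hcomp : μ.IsComplete) [Countable I] [DecidableEq I]
    [NormedAddCommGroup Y] [NormedSpace ℝ Y] [CompleteSpace Y] [SeparableSpace Y]
    [MeasurableSpace Y] [BorelSpace Y]
    -- the common information partition
    (A : ℕ → Set Ω)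
    (hAmeas : ∀ n, MeasurableSet (A n))
    (hAdisj : Pairwise (Function.onFun Disjoint A))
    (hAcover : ⋃ n, A n = Set.univ)
    (hgen : MeasurableSpace.generateFrom (Set.range A) = mΩ)
    -- the priors
    (q : I → Ω → ℝ) (hqmeas : ∀ i, Measurable (q i))
    (hq01 : ∀ i ω, 0 < q i ω ∧ q i ω ≤ 1) (hqint : ∀ i, ∫ ω, q i ω ∂μ = 1)
    (hcellpos : ∀ i n, ∀ ω ∈ A n, 0 < ∫ t in A n, q i t ∂μ)
    -- (1) strategy sets
    (X : I → Set Y)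
    (hXne : ∀ i, (X i).Nonempty) (hXcpt : ∀ i, IsCompact (X i))
    (hXconv : ∀ i, Convex ℝ (X i))
    -- the payoffs: jointly measurable and integrably bounded
    (u : (i : I) → Ω → ((j : I) → X j) → ℝ)
    (humeas : ∀ i, Measurable (Function.uncurry (u i)))
    (hubdd : ∀ i, ∃ g : Ω → ℝ, Integrable g μ ∧ ∀ᵐ ω ∂μ, ∀ x, |u i ω x| ≤ g ω)
    -- the conditional expected utilities
    (h : (i : I) → Ω → ((j : I) → X j) → ℝ)
    (hh : ∀ i ω x n, ω ∈ A n →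
      h i ω x = (∫ t in A n, q i t * u i t x ∂μ) / (∫ t in A n, q i t ∂μ))
    -- (2) concavity in the own strategy
    (hconc : ∀ i ω (x : (j : I) → X j) (y₁ y₂ : X i) (a b : ℝ) (ha : 0 ≤ a) (hb : 0 ≤ b)
      (hab : a + b = 1),
      a * u i ω (Function.update x i y₁) + b * u i ω (Function.update x i y₂) ≤
        u i ω (Function.update x i
          ⟨a • (y₁ : Y) + b • (y₂ : Y), hXconv i y₁.2 y₂.2 ha hb hab⟩))
    -- (3)
    (F : (i : I) → ((j : I) → X j) → Ω → ((j : I) → X j) → Set Y)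
    (O : (i : I) → ((j : I) → X j) → Ω → Set ((j : I) → X j))
    (hcipa : IsAtomicMeasure μ → ∀ i, CIPWitness (PrefCorr X h i) (F i) (O i))
    (hcipn : ¬IsAtomicMeasure μ → ∀ i, SCIPWitness (PrefCorr X h i) (F i) (O i))
    -- (4)
    (hone : ∀ i, FiniteDimensional ℝ Y ∨ ∀ ω x, (PrefCorr X h i ω x).Nonempty →
      (Kmap (PrefCorr X h i) (F i) (O i) ω x).Nonempty) :
    ∃ xs : Ω → (j : I) → X j, Measurable xs ∧
      ∀ i, ∀ᵐ ω ∂μ, ∀ y : X i, h i ω (Function.update (xs ω) i y) ≤ h i ω (xs ω) := by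
  classical
  -- every measurable set is a union of cells
  have hcell : ∀ n, ∀ B : Set Ω, MeasurableSet B → A n ⊆ B ∨ A n ⊆ Bᶜ := by
    intro n B hB
    rw [← hgen] at hB
    induction hB with
    | basic u hu =>
      obtain ⟨k, rfl⟩ := hu
      by_cases hk : n = k
      · left; rw [hk]
      · right
        exact Set.subset_compl_iff_disjoint_right.2 (hAdisj hk)
    | empty => right; simp
    | compl t _ ih =>
      rcases ih with h | h
      · right; rwa [compl_compl]
      · left; exact h
    | iUnion f _ ih =>
      by_cases hex : ∃ k, A n ⊆ f k
      · obtain ⟨k, hk⟩ := hex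
        left
        exact hk.trans (Set.subset_iUnion f k)
      · right
        push Not at hex
        rw [Set.compl_iUnion]
        exact Set.subset_iInter fun k => (ih k).resolve_left (hex k)
  have hpos : ∀ n, (A n).Nonempty → ∀ i : I, μ (A n) ≠ 0 := by
    rintro n ⟨ω, hω⟩ i h0
    have h1 := hcellpos i n ω hω
    rw [Measure.restrict_eq_zero.2 h0, integral_zero_measure] at h1
    exact lt_irrefl _ h1
  have hXN : Nonempty ((j : I) → X j) := ⟨fun j => ⟨_, (hXne j).some_mem⟩⟩
  rcases isEmpty_or_nonempty I with hI | ⟨⟨i₀⟩⟩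
  · obtain ⟨x⟩ := hXN
    exact ⟨fun _ => x, measurable_const, fun i => (hI.false i).elim⟩
  have hatom : IsAtomicMeasure μ := by
    refine ⟨{B | ∃ n, (A n).Nonempty ∧ B = A n}, ?_, ?_, ?_⟩
    · refine (Set.countable_range A).mono ?_
      rintro B ⟨n, -, rfl⟩
      exact ⟨n, rfl⟩
    · rintro B ⟨n, hn, rfl⟩
      refine ⟨hAmeas n, hpos n hn i₀, ?_⟩
      intro B hB hBm
      rcases hcell n B hBm with h | h
      · right
        rw [Set.diff_eq_empty.2 h, measure_empty]
      · left
        have : B = ∅ := by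
          ext ω
          constructor
          · intro hω; exact (h (hB hω) hω).elim
          · intro hω; exact hω.elim
        rw [this, measure_empty]
    · rw [Set.eq_univ_iff_forall]
      intro ω
      obtain ⟨n, hn⟩ := Set.mem_iUnion.1 (hAcover ▸ Set.mem_univ ω : ω ∈ ⋃ n, A n)
      exact ⟨A n, ⟨n, ⟨ω, hn⟩, rfl⟩, hn⟩
  have hcip := hcipa hatom
  -- integrability
  have hint : ∀ i x, Integrable (fun t => q i t * u i t x) μ := by
    intro i x
    obtain ⟨g, hg, hgb⟩ := hubdd i
    have hm : Measurable fun t => u i t x :=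
      (humeas i).comp (measurable_id.prodMk measurable_const)
    refine hg.mono' ((hqmeas i).mul hm).aestronglyMeasurable ?_
    filter_upwards [hgb] with ω hω
    rw [norm_mul, Real.norm_of_nonneg (hq01 i ω).1.le, Real.norm_eq_abs]
    calc q i ω * |u i ω x| ≤ 1 * |u i ω x| :=
          mul_le_mul_of_nonneg_right (hq01 i ω).2 (abs_nonneg _)
      _ ≤ g ω := by rw [one_mul]; exact hω x
  have hcov : ∀ ω, ∃ n, ω ∈ A n := fun ω =>
    Set.mem_iUnion.1 (hAcover ▸ Set.mem_univ ω : ω ∈ ⋃ n, A n)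
  -- concavity of the conditional expected utilities
  have hhconc : ∀ i ω (x : (j : I) → X j) (y₁ y₂ : X i) (a b : ℝ) (ha : 0 ≤ a) (hb : 0 ≤ b)
      (hab : a + b = 1),
      a * h i ω (Function.update x i y₁) + b * h i ω (Function.update x i y₂) ≤
        h i ω (Function.update x i
          ⟨a • (y₁ : Y) + b • (y₂ : Y), hXconv i y₁.2 y₂.2 ha hb hab⟩) := by
    intro i ω x y₁ y₂ a b ha hb hab
    obtain ⟨n, hn⟩ := hcov ω
    have hq := hcellpos i n ω hn
    rw [hh i ω _ n hn, hh i ω _ n hn, hh i ω _ n hn, ← mul_div_assoc, ← mul_div_assoc, ← add_div]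
    apply div_le_div_of_nonneg_right _ hq.le
    rw [← integral_const_mul, ← integral_const_mul, ← integral_add
      ((hint i _).integrableOn.const_mul a) ((hint i _).integrableOn.const_mul b)]
    refine integral_mono (((hint i _).integrableOn.const_mul a).add
      ((hint i _).integrableOn.const_mul b)) (hint i _).integrableOn ?_
    intro t
    have h1 := mul_le_mul_of_nonneg_left (hconc i t x y₁ y₂ a b ha hb hab) (hq01 i t).1.le
    refine le_trans (le_of_eq ?_) h1
    ring
  have hPX : ∀ ω i x, PrefCorr X h i ω x ⊆ X i := by
    rintro ω i x y ⟨hy, -⟩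
    exact hy
  have hPc : ∀ ω i x, Convex ℝ (PrefCorr X h i ω x) := by
    rintro ω i x y₁ ⟨hy₁, h₁⟩ y₂ ⟨hy₂, h₂⟩ a b ha hb hab
    refine ⟨hXconv i hy₁ hy₂ ha hb hab, ?_⟩
    have h3 := hhconc i ω x ⟨y₁, hy₁⟩ ⟨y₂, hy₂⟩ a b ha hb hab
    set v₁ := h i ω (Function.update x i ⟨y₁, hy₁⟩)
    set v₂ := h i ω (Function.update x i ⟨y₂, hy₂⟩)
    have h4 : h i ω x < a * v₁ + b * v₂ := by
      have hb' : b = 1 - a := by linarith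
      rcases ha.eq_or_lt with h0 | h0
      · rw [hb', ← h0]; linarith
      · subst hb'
        nlinarith [mul_pos h0 h₁, mul_nonneg hb h₂.le]
    exact sub_pos.2 (lt_of_lt_of_le h4 h3)
  have hirr : ∀ ω i (x : (j : I) → X j), (x i : Y) ∉ PrefCorr X h i ω x := by
    rintro ω i x ⟨hy, h1⟩
    have : Function.update x i ⟨(x i : Y), hy⟩ = x := Function.update_eq_self i x
    rw [this, sub_self] at h1
    exact lt_irrefl _ h1
  -- equilibrium in every state
  have heq : ∀ ω, ∃ x, ∀ i, ¬ (PrefCorr X h i ω x).Nonempty := by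
    intro ω
    by_cases hfd : FiniteDimensional ℝ Y
    · exact nash_exists X hXne hXcpt hXconv (fun i x => PrefCorr X h i ω x) (hPX ω) (hPc ω)
        (hirr ω) (fun i z x => F i z ω x) (fun i z => O i z ω)
        (fun i z hz => (hcip i).1 z ω hz) (fun i z hz => (hcip i).2.1 z ω hz)
    · obtain ⟨x⟩ := hXN
      refine ⟨x, fun i hi => hfd ?_⟩
      have hK := (hone i).resolve_left hfd ω x hi
      obtain ⟨y, hy⟩ := hK
      simp only [Kmap, Set.mem_iUnion] at hy
      obtain ⟨z, ⟨hz, hxz⟩, hy⟩ := hy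
      have hsub : F i z ω x ⊆ X i := (((hcip i).1 z ω hz).2.2 x hxz).2.trans (hPX ω i x)
      obtain ⟨δ, hδ, hball⟩ := Metric.nhds_basis_closedBall.mem_iff.1
        (mem_interior_iff_mem_nhds.1 hy)
      exact FiniteDimensional.of_isCompact_closedBall ℝ hδ
        ((hXcpt i).of_isClosed_subset Metric.isClosed_closedBall (hball.trans hsub))
  -- glue over the cells
  have hcst : ∀ n, ∃ x, ∀ ω ∈ A n, ∀ i, ∀ y : X i, h i ω (Function.update x i y) ≤ h i ω x := by
    intro n
    by_cases hn : (A n).Nonempty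
    · obtain ⟨ω₀, hω₀⟩ := hn
      obtain ⟨x, hx⟩ := heq ω₀
      refine ⟨x, fun ω hω i y => ?_⟩
      have hsame : ∀ z, h i ω z = h i ω₀ z := fun z => by
        rw [hh i ω z n hω, hh i ω₀ z n hω₀]
      rw [hsame, hsame]
      by_contra hlt
      push Not at hlt
      exact hx i ⟨y, y.2, sub_pos.2 hlt⟩
    · obtain ⟨x⟩ := hXN
      exact ⟨x, fun ω hω => absurd ⟨ω, hω⟩ hn⟩
  choose c hc using hcst
  choose N hN using hcov
  have hNm : Measurable N := by
    refine measurable_to_countable' fun n => ?_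
    have : N ⁻¹' {n} = A n := by
      ext ω
      constructor
      · intro h1
        have h2 : N ω = n := h1
        exact h2 ▸ hN ω
      · intro h1
        by_contra h2
        exact Set.disjoint_left.1 (hAdisj h2) (hN ω) h1
    rw [this]
    exact hAmeas n
  refine ⟨fun ω => c (N ω), (measurable_from_top (f := c)).comp hNm, fun i => ?_⟩
  exact Filter.Eventually.of_forall fun ω y => hc (N ω) ω (hN ω) i y
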